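/- Let μ be a probability measure on 𝕊 whose density is Lipschitz on J_z with some constant L > 0 for some z ∈ 𝕊. Then there exists K > 0 such that for all n ≥ 1 and all t₁, t₂ ∈ [0,1], ∫ |ξₙ(x,t₂) − ξₙ(x,t₁)|⁴ dμ(x) ≤ K |t₂ − t₁|². Consequently (by Kolmogorov's tightness criterion, since ξₙ(·,0) = 0), the sequence of laws of the random paths t ↦ ξₙ(x,t) on C⁰([0,1],ℝ) is tight. -/

import Mathlib

open MeasureTheory Filter Topology Set UniformConvergence

noncomputable section

instance : Fact ((0:ℝ) < 1) := ⟨zero_lt_one⟩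

/-- The circle `𝕊 = ℝ/ℤ`. -/
abbrev Circle1 : Type := AddCircle (1 : ℝ)

/-- A `C²` expanding circle map with expansion `≥ lam` and `‖T''‖_∞ ≤ Astar`,
encoded by a lift `F : ℝ → ℝ` satisfying `F (x+1) = F x + deg`. -/
structure CM (lam Astar : ℝ) where
  F : ℝ → ℝ
  deg : ℤ
  lift_add_one : ∀ x : ℝ, F (x + 1) = F x + deg
  contDiff : ContDiff ℝ 2 F
  expanding : ∀ x : ℝ, lam ≤ deriv F x
  second_bound : ∀ x : ℝ, |deriv (deriv F) x| ≤ Astar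

namespace CM

variable {lam Astar : ℝ}

/-- The induced map on the circle. -/
def toMap (T : CM lam Astar) : Circle1 → Circle1 :=
  fun x => (↑(T.F ((AddCircle.equivIco 1 0 x : ℝ))) : Circle1)

/-- The derivative of `T`, as a function on the circle. -/
def dmap (T : CM lam Astar) : Circle1 → ℝ :=
  fun x => deriv T.F ((AddCircle.equivIco 1 0 x : ℝ))

end CM

/-- The `C¹` distance on the space of maps. -/
def dC1 {lam Astar : ℝ} (T₁ T₂ : CM lam Astar) : ℝ :=
  (⨆ x : Circle1, dist (T₁.toMap x) (T₂.toMap x)) + (⨆ x : Circle1, |T₁.dmap x - T₂.dmap x|)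

/-- The transfer operator `ℒ_T h (x) = ∑_{T y = x} h y / T' y`. -/
def transfer {lam Astar : ℝ} (T : CM lam Astar) (h : Circle1 → ℝ) : Circle1 → ℝ :=
  fun x => ∑' y : {y : Circle1 // T.toMap y = x}, h y / T.dmap y

/-- Iterated transfer operators `ℒ_k ⋯ ℒ_1` of the sequence `T_1, T_2, …` (`Ts i = T_i`). -/
def transferIter {lam Astar : ℝ} (Ts : ℕ → CM lam Astar) : ℕ → (Circle1 → ℝ) → (Circle1 → ℝ)
  | 0, h => h
  | (k+1), h => transfer (Ts (k+1)) (transferIter Ts k h)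

/-- Composition `T_k ∘ ⋯ ∘ T_1` as circle maps. -/
def mapIter {lam Astar : ℝ} (Ts : ℕ → CM lam Astar) : ℕ → Circle1 → Circle1
  | 0 => id
  | (k+1) => (Ts (k+1)).toMap ∘ mapIter Ts k

/-- Composition of the lifts `F_k ∘ ⋯ ∘ F_1`. -/
def liftIter {lam Astar : ℝ} (Ts : ℕ → CM lam Astar) : ℕ → ℝ → ℝ
  | 0 => id
  | (k+1) => (Ts (k+1)).F ∘ liftIter Ts k

/-- A real representative of `z`. -/
def zrep (z : Circle1) : ℝ := (AddCircle.equivIco 1 0 z : ℝ)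

/-- The coordinate on the cut circle `J_z = 𝕊 ∖ {z}`. -/
def arcCoord (z x : Circle1) : ℝ := ((AddCircle.equivIoc 1 (zrep z) x : ℝ))

/-- `|x − y|_z`: the length of the subarc of `J_z` connecting `x` and `y`. -/
def arcDist (z x y : Circle1) : ℝ := |arcCoord z x - arcCoord z y|

/-- `g` is Lipschitz on `J_z = 𝕊 ∖ {z}` with constant `L`. -/
def LipOnArc (z : Circle1) (L : ℝ) (g : Circle1 → ℝ) : Prop :=
  ∀ x y : Circle1, x ≠ z → y ≠ z → |g x - g y| ≤ L * arcDist z x y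

/-- A probability density w.r.t. the Haar–Lebesgue measure `𝔪` on the circle. -/
def IsProbDensity (ψ : Circle1 → ℝ) : Prop :=
  Integrable ψ volume ∧ (∫ x : Circle1, ψ x) = 1 ∧ ∀ x, 0 ≤ ψ x

/-- The class `𝒟_L`: positive probability densities whose logarithm is Lipschitz
with constant `L` on `J_z` for some `z`. -/
def memD (L : ℝ) (ψ : Circle1 → ℝ) : Prop :=
  IsProbDensity ψ ∧ (∀ x, 0 < ψ x) ∧ ∃ z : Circle1, LipOnArc z L (fun x => Real.log (ψ x))

/-- The `L¹(𝔪)` norm. -/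
def l1norm (h : Circle1 → ℝ) : ℝ := ∫ x : Circle1, |h x|

/-- The supremum norm. -/
def supNorm (h : Circle1 → ℝ) : ℝ := ⨆ x : Circle1, |h x|

/-- The Lipschitz constant of `h` (w.r.t. the metric of the circle). -/
def lipConst (h : Circle1 → ℝ) : ℝ :=
  sInf {L : ℝ | 0 ≤ L ∧ ∀ x y : Circle1, |h x - h y| ≤ L * dist x y}

/-- The Lipschitz norm `‖h‖_Lip = Lip(h) + ‖h‖_∞`. -/
def lipNorm (h : Circle1 → ℝ) : ℝ := lipConst h + supNorm h

/-- `ρ` is the density of the SRB measure of `T`: the density of a `T`-invariant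
probability measure equivalent to `𝔪`. -/
def IsSRBDensity {lam Astar : ℝ} (T : CM lam Astar) (ρ : Circle1 → ℝ) : Prop :=
  IsProbDensity ρ ∧ (∀ᵐ x : Circle1, 0 < ρ x) ∧
    Measure.map T.toMap (volume.withDensity (fun x => ENNReal.ofReal (ρ x))) =
      volume.withDensity (fun x => ENNReal.ofReal (ρ x))

section QDS

variable {lam Astar : ℝ}

/-- `x_{n,k} = T_{n,k} ∘ ⋯ ∘ T_{n,1}` for a triangular array. -/
def arrIter (Tarr : ℕ → ℕ → CM lam Astar) (n : ℕ) : ℕ → Circle1 → Circle1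
  | 0 => id
  | (k+1) => (Tarr n (k+1)).toMap ∘ arrIter Tarr n k

/-- `ℒ_{n,k} ⋯ ℒ_{n,1}` for a triangular array. -/
def arrTransfer (Tarr : ℕ → ℕ → CM lam Astar) (n : ℕ) : ℕ → (Circle1 → ℝ) → (Circle1 → ℝ)
  | 0, h => h
  | (k+1), h => transfer (Tarr n (k+1)) (arrTransfer Tarr n k h)

/-- `f_{n,k} = f ∘ T_{n,k} ∘ ⋯ ∘ T_{n,1}` evaluated at `x`. -/
def fnk (Tarr : ℕ → ℕ → CM lam Astar) (f : Circle1 → ℝ) (n k : ℕ) (x : Circle1) : ℝ :=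
  f (arrIter Tarr n k x)

/-- `ζₙ(x,t) = n⁻¹ (∑_{k<⌊nt⌋} f_{n,k}(x) + {nt}·f_{n,⌊nt⌋}(x))`. -/
def zetaP (Tarr : ℕ → ℕ → CM lam Astar) (f : Circle1 → ℝ) (n : ℕ) (x : Circle1) (t : ℝ) : ℝ :=
  (n : ℝ)⁻¹ * ((∑ k ∈ Finset.range ⌊(n : ℝ) * t⌋₊, fnk Tarr f n k x) +
    Int.fract ((n : ℝ) * t) * fnk Tarr f n ⌊(n : ℝ) * t⌋₊ x)

/-- `ξₙ(x,t) = √n ζₙ(x,t) − √n μ(ζₙ(·,t))` for a measure `μ`. -/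
def xiP (Tarr : ℕ → ℕ → CM lam Astar) (f : Circle1 → ℝ) (μ : Measure Circle1) (n : ℕ)
    (x : Circle1) (t : ℝ) : ℝ :=
  Real.sqrt n * zetaP Tarr f n x t - Real.sqrt n * ∫ y, zetaP Tarr f n y t ∂μ

/-- The Hölder continuity (exponent `η`) of the curve `γ` on `[0,1]`, w.r.t. `d_{C¹}`. -/
def HolderCurve (η : ℝ) (γ : ℝ → CM lam Astar) : Prop :=
  ∃ H : ℝ, ∀ s ∈ Icc (0:ℝ) 1, ∀ t ∈ Icc (0:ℝ) 1, dC1 (γ s) (γ t) ≤ H * |s - t| ^ η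

/-- The convergence-rate condition `sup_n n^η sup_t d_{C¹}(T_{n,⌊nt⌋}, γ_t) < ∞`. -/
def ArrayApprox (η : ℝ) (γ : ℝ → CM lam Astar) (Tarr : ℕ → ℕ → CM lam Astar) : Prop :=
  ∃ M : ℝ, ∀ n : ℕ, 1 ≤ n → ∀ t ∈ Icc (0:ℝ) 1,
    (n : ℝ) ^ η * dC1 (Tarr n ⌊(n : ℝ) * t⌋₊) (γ t) ≤ M

end QDS

/-- The path space: functions `[0,1] → ℝ` with the topology of uniform convergence;
continuous paths (with the supremum metric) embed isometrically. -/
abbrev PathSpace : Type := (Icc (0:ℝ) 1) →ᵤ ℝ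

instance : MeasurableSpace PathSpace := borel PathSpace

/-- A function `[0,1] → ℝ` (given as a function on `ℝ`) as a point of the path space. -/
def pathOf (g : ℝ → ℝ) : PathSpace := UniformFun.ofFun (fun t => g t)

/-- Evaluation of a path at time `t` (clamped to `[0,1]`). -/
def evalPath (t : ℝ) (ω : PathSpace) : ℝ := UniformFun.toFun ω (projIcc 0 1 zero_le_one t)


section Extra

variable {lam Astar : ℝ}

/-- `μ(ζₙ(·,t))` for the measure with density `ρ` w.r.t. `𝔪`. -/
def zetaMean (Tarr : ℕ → ℕ → CM lam Astar) (f : Circle1 → ℝ) (ρ : Circle1 → ℝ)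
    (n : ℕ) (t : ℝ) : ℝ :=
  ∫ y : Circle1, zetaP Tarr f n y t * ρ y

/-- `𝔪(ζₙ(·,t))`, the mean w.r.t. the Lebesgue measure. -/
def zetaMeanM (Tarr : ℕ → ℕ → CM lam Astar) (f : Circle1 → ℝ) (n : ℕ) (t : ℝ) : ℝ :=
  ∫ y : Circle1, zetaP Tarr f n y t

/-- `ξₙ(x,t) = √n ζₙ(x,t) − √n μ(ζₙ(·,t))`, where `μ` has density `ρ`. -/
def xiD (Tarr : ℕ → ℕ → CM lam Astar) (f : Circle1 → ℝ) (ρ : Circle1 → ℝ)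
    (n : ℕ) (x : Circle1) (t : ℝ) : ℝ :=
  Real.sqrt n * zetaP Tarr f n x t - Real.sqrt n * zetaMean Tarr f ρ n t

end Extra

/-- The σ-algebra `𝔉_t` on the path space, generated by the evaluations at times `s ∈ [0,t]`. -/
def pathFiltration (t : ℝ) : MeasurableSpace PathSpace :=
  ⨆ (s : ℝ) (_ : 0 ≤ s ∧ s ≤ t), MeasurableSpace.comap (evalPath s) (borel ℝ)

/-- The process `M_t(ω) = A(ω(t)) − A(ω(0)) − ½∫₀ᵗ σ̂ₛ²·A''(ω(s)) ds`. -/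
def MGproc (σ2 : ℝ → ℝ) (A : ℝ → ℝ) (t : ℝ) (ω : PathSpace) : ℝ :=
  A (evalPath t ω) - A (evalPath 0 ω) -
    (1/2) * ∫ s in (0:ℝ)..t, σ2 s * deriv (deriv A) (evalPath s ω)

/-- `P` solves the martingale problem on `C⁰([0,1],ℝ)` for the generator `½σ̂ₜ² d²/dx²`,
started at `0`:  `P` is a probability measure, concentrated on continuous paths starting at `0`,
and for every `A ∈ C_c^∞(ℝ)` the process `MGproc σ2 A` is a `P`-martingale w.r.t. the
natural filtration `𝔉_t`.  -/
def SolvesMartingaleProblem (σ2 : ℝ → ℝ) (P : Measure PathSpace) : Prop :=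
  IsProbabilityMeasure P ∧
  P {ω : PathSpace | evalPath 0 ω = 0} = 1 ∧
  P {ω : PathSpace | Continuous (UniformFun.toFun ω)} = 1 ∧
  ∀ A : ℝ → ℝ, ContDiff ℝ (⊤ : ℕ∞) A → HasCompactSupport A →
    (∀ t ∈ Icc (0:ℝ) 1, Integrable (MGproc σ2 A t) P) ∧
    (∀ t ∈ Icc (0:ℝ) 1, @Measurable PathSpace ℝ (pathFiltration t) _ (MGproc σ2 A t)) ∧
    (∀ s ∈ Icc (0:ℝ) 1, ∀ t ∈ Icc (0:ℝ) 1, s ≤ t →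
      P[MGproc σ2 A t | pathFiltration s] =ᵐ[P] MGproc σ2 A s)

end


/-- positive continuous periodic functions with log-Lipschitz bound `a`. -/
structure ConeF (a : ℝ) (ψ : ℝ → ℝ) : Prop where
  per : Function.Periodic ψ 1
  cont : Continuous ψ
  pos : ∀ x, 0 < ψ x
  lip : ∀ x y, ψ x ≤ Real.exp (a * |x - y|) * ψ y

section inv
variable {lam Astar : ℝ} (T : CM lam Astar)

lemma CM.hasDerivAt (x : ℝ) : HasDerivAt T.F (deriv T.F x) x :=
  (T.contDiff.differentiable (by norm_num) x).hasDerivAt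

lemma CM.cont : Continuous T.F := T.contDiff.continuous

lemma CM.contDeriv : Continuous (deriv T.F) := T.contDiff.continuous_deriv (by norm_num)

lemma CM.expand (hlam : 1 < lam) {x y : ℝ} (h : x ≤ y) : lam * (y - x) ≤ T.F y - T.F x := by
  have := Convex.mul_sub_le_image_sub_of_le_deriv (D := univ) convex_univ (f := T.F) (C := lam)
    T.cont.continuousOn (T.contDiff.differentiable (by norm_num)).differentiableOn
    (fun x _ => T.expanding x) x (mem_univ _) y (mem_univ _) h
  exact this

lemma CM.strictMono (hlam : 1 < lam) : StrictMono T.F := by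
  intro x y h
  have := T.expand hlam h.le
  nlinarith

lemma CM.surj (hlam : 1 < lam) : Function.Surjective T.F := by
  apply T.cont.surjective
  · apply tendsto_atTop_mono' atTop (f₁ := fun x => x + T.F 0)
    · filter_upwards [eventually_ge_atTop 0] with x hx
      have := T.expand hlam hx
      nlinarith
    · exact tendsto_atTop_add_const_right _ _ tendsto_id
  · apply tendsto_atBot_mono' atBot (f₁ := fun x => x + T.F 0)
    · filter_upwards [eventually_le_atBot 0] with x hx
      have := T.expand hlam hx
      nlinarith
    · exact tendsto_atBot_add_const_right _ _ tendsto_id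

/-- inverse branch package -/
lemma CM.exists_inv (hlam : 1 < lam) : ∃ G : ℝ → ℝ, ∃ d : ℕ, (d : ℤ) = T.deg ∧ 
    (∀ x, T.F (G x) = x) ∧ (∀ x, G (T.F x) = x) ∧
    Continuous G ∧ (∀ x, G (x + d) = G x + 1) ∧
    (∀ x y, |G x - G y| ≤ |x - y| / lam) := by
  let e := (T.strictMono hlam).orderIsoOfSurjective T.F (T.surj hlam)
  have h1 : ∀ x, T.F (e.symm x) = x := fun x => e.apply_symm_apply x
  have h2 : ∀ x, e.symm (T.F x) = x := fun x => e.symm_apply_apply x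
  have hd : 0 ≤ T.deg := by
    have := T.expand hlam (x := 0) (y := 0 + 1) (by norm_num)
    rw [T.lift_add_one] at this
    have h3 : (0:ℝ) < T.deg := by linarith
    exact_mod_cast h3.le
  have hdd : ((T.deg.toNat : ℕ) : ℝ) = (T.deg : ℝ) := by
    have := Int.toNat_of_nonneg hd
    exact_mod_cast this
  refine ⟨e.symm, T.deg.toNat, Int.toNat_of_nonneg hd, h1, h2, e.symm.continuous, ?_, ?_⟩
  · intro x
    apply (T.strictMono hlam).injective
    rw [h1, T.lift_add_one, h1, hdd]
  · have key : ∀ x y, x ≤ y → |e.symm x - e.symm y| ≤ |x - y| / lam := by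
      intro x y hxy
      have hm : e.symm x ≤ e.symm y := e.symm.monotone hxy
      have := T.expand hlam hm
      rw [h1, h1] at this
      rw [abs_sub_comm, abs_sub_comm x y, abs_of_nonneg (sub_nonneg.2 hm), abs_of_nonneg (sub_nonneg.2 hxy), le_div_iff₀ (by linarith)]
      linarith
    intro x y
    rcases le_total x y with h | h
    · exact key x y h
    · rw [abs_sub_comm, abs_sub_comm x y]; exact key y x h

lemma CM.deriv_periodic (x : ℝ) : deriv T.F (x + 1) = deriv T.F x := by
  have : deriv (fun y => T.F (y + 1)) x = deriv (fun y => T.F y + T.deg) x := by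
    congr 1; ext y; exact T.lift_add_one y
  rw [deriv_comp_add_const, deriv_add_const] at this
  exact this

/-- distortion bound for `F'`. -/
lemma CM.distort (hlam : 1 < lam) (hA : 0 < Astar) (x y : ℝ) :
    deriv T.F y ≤ Real.exp (Astar / lam * |x - y|) * deriv T.F x := by
  have hp : ∀ x, 0 < deriv T.F x := fun x => by linarith [T.expanding x]
  have hdiff : Differentiable ℝ (deriv T.F) := by
    have h2 : ContDiff ℝ 1 (deriv T.F) := by
      have h := T.contDiff
      rw [show (2 : WithTop ℕ∞) = 1 + 1 by norm_num, contDiff_succ_iff_deriv] at h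
      exact h.2.2
    exact h2.differentiable (by norm_num)
  have := Convex.norm_image_sub_le_of_norm_deriv_le (s := univ) (f := fun x => Real.log (deriv T.F x)) (C := Astar / lam) (x := x) (y := y)
    (fun x _ => (hdiff x).log (hp x).ne')
    (fun x _ => by
      rw [deriv.log (hdiff x) (hp x).ne', Real.norm_eq_abs, abs_div, abs_of_pos (hp x)]
      exact div_le_div₀ hA.le (T.second_bound x) (by linarith) (T.expanding x))
    convex_univ (mem_univ _) (mem_univ _)
  rw [Real.norm_eq_abs, Real.norm_eq_abs, abs_sub_comm y x] at this
  have h3 := (le_abs_self _).trans this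
  rw [← Real.log_le_log_iff (hp y) (by have := hp x; positivity), Real.log_mul (Real.exp_pos _).ne' (hp x).ne', Real.log_exp]
  linarith

/-- The transfer operator in dual form. -/
lemma CM.transfer_cone (hlam : 1 < lam) (hA : 0 < Astar) {a' : ℝ} (ha' : 0 ≤ a') {ψ : ℝ → ℝ} (hψ : ConeF a' ψ) :
    ∃ ψ', ConeF (a' / lam + Astar / lam ^ 2) ψ' ∧ ∀ φ : ℝ → ℝ, Continuous φ → Function.Periodic φ 1 →
      ∫ x in (0:ℝ)..1, ψ x * φ (T.F x) = ∫ x in (0:ℝ)..1, ψ' x * φ x := by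
  obtain ⟨G, d, hd, hFG, hGF, hGc, hGd, hGl⟩ := T.exists_inv hlam
  have hp : ∀ x, 0 < deriv T.F x := fun x => by linarith [T.expanding x]
  have hdr : (T.deg : ℝ) = d := by rw [← hd]; simp
  have hd0 : 0 < d := by
    have := T.expand hlam (x := 0) (y := 0 + 1) (by norm_num)
    rw [T.lift_add_one, hdr] at this
    have h3 : (0:ℝ) < d := by linarith
    exact_mod_cast h3
  set h : ℝ → ℝ := fun x => ψ (G x) / deriv T.F (G x) with hh
  have hhc : Continuous h := (hψ.cont.comp hGc).div₀ (T.contDeriv.comp hGc) (fun x => (hp _).ne')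
  have hhp : ∀ x, 0 < h x := fun x => div_pos (hψ.pos _) (hp _)
  have hhper : Function.Periodic h d := by
    intro x
    simp only [hh, hGd, T.deriv_periodic, hψ.per (G x)]
  have hhl : ∀ x y, h x ≤ Real.exp ((a' / lam + Astar / lam ^ 2) * |x - y|) * h y := by
    intro x y
    simp only [hh]
    have e1 := hψ.lip (G x) (G y)
    have e2 := T.distort hlam hA (G x) (G y)
    have e3 := hGl x y
    rw [div_le_iff₀ (hp _)]
    calc ψ (G x) ≤ Real.exp (a' * |G x - G y|) * ψ (G y) := e1
      _ = Real.exp (a' * |G x - G y|) * (ψ (G y) / deriv T.F (G y)) * deriv T.F (G y) := by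
        have := (hp (G y)).ne'; field_simp
      _ ≤ Real.exp (a' * |G x - G y|) * (ψ (G y) / deriv T.F (G y)) * (Real.exp (Astar / lam * |G x - G y|) * deriv T.F (G x)) := by
        have := hhp y
        simp only [hh] at this
        gcongr
      _ = Real.exp ((a' + Astar / lam) * |G x - G y|) * (ψ (G y) / deriv T.F (G y)) * deriv T.F (G x) := by
        rw [add_mul, Real.exp_add]; ring
      _ ≤ Real.exp ((a' / lam + Astar / lam ^ 2) * |x - y|) * (ψ (G y) / deriv T.F (G y)) * deriv T.F (G x) := by
        have := hhp y
        simp only [hh] at this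
        have := hp (G x)
        have hl0 : 0 < lam := by linarith
        have hkey : (a' + Astar / lam) * |G x - G y| ≤ (a' / lam + Astar / lam ^ 2) * |x - y| := by
          calc (a' + Astar / lam) * |G x - G y| ≤ (a' + Astar / lam) * (|x - y| / lam) := by gcongr
            _ = _ := by field_simp
        have := Real.exp_le_exp.2 hkey
        gcongr ?_ * _ * _
  refine ⟨fun x => ∑ j ∈ Finset.range d, h (x + j), ⟨?_, ?_, ?_, ?_⟩, ?_⟩
  · intro x
    have e1 := Finset.sum_range_succ (fun j : ℕ => h (x + j)) d
    have e2 := Finset.sum_range_succ' (fun j : ℕ => h (x + j)) d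
    rw [hhper x] at e1
    simp only [Nat.cast_add, Nat.cast_one, Nat.cast_zero, add_zero] at e2
    have e3 : ∑ j ∈ Finset.range d, h (x + 1 + j) = ∑ j ∈ Finset.range d, h (x + (j + 1)) := by
      apply Finset.sum_congr rfl; intro j _; congr 1; ring
    simp only [e3]
    linarith
  · fun_prop
  · intro x
    exact Finset.sum_pos (fun j _ => hhp _) ⟨0, by simpa using hd0⟩
  · intro x y
    rw [Finset.mul_sum]
    apply Finset.sum_le_sum
    intro j _
    have := hhl (x + j) (y + j)
    simpa using this
  · intro φ hφ hφp
    have hφd : Function.Periodic φ d := by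
      have := hφp.nat_mul d
      simpa using this
    set g : ℝ → ℝ := fun y => h y * φ y with hg
    have hgc : Continuous g := hhc.mul hφ
    have hgper : Function.Periodic g d := hhper.mul hφd
    have e1 := intervalIntegral.integral_comp_mul_deriv (a := 0) (b := 1) (f := T.F) (f' := deriv T.F) (g := g)
      (fun x _ => T.hasDerivAt x) T.contDeriv.continuousOn hgc
    have e2 : ∀ x, (g ∘ T.F) x * deriv T.F x = ψ x * φ (T.F x) := by
      intro x
      simp only [Function.comp, hg, hh, hGF]
      have := (hp x).ne'
      field_simp
    simp only [e2] at e1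
    have e3 : T.F 1 = T.F 0 + d := by
      have := T.lift_add_one 0
      rw [zero_add, hdr] at this; exact this
    rw [e1, e3, hgper.intervalIntegral_add_eq (T.F 0) 0, zero_add]
    have e4 := intervalIntegral.sum_integral_adjacent_intervals (f := g) (μ := volume) (a := fun k : ℕ => (k:ℝ)) (n := d)
      (fun k _ => hgc.intervalIntegrable _ _)
    simp only [Nat.cast_zero] at e4
    rw [← e4]
    simp only [Finset.sum_mul]
    rw [intervalIntegral.integral_finsetSum]
    · apply Finset.sum_congr rfl
      intro k _
      have e5 := intervalIntegral.integral_comp_add_right (a := 0) (b := 1) g (k:ℝ)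
      rw [zero_add] at e5
      push_cast
      rw [add_comm (k:ℝ) 1, ← e5]
      apply intervalIntegral.integral_congr
      intro x _
      simp only [hg]
      have := hφp.nat_mul k x
      rw [mul_one] at this
      rw [this]
    · intro k _
      apply Continuous.intervalIntegrable
      fun_prop

end inv


lemma ConeF.upper {a : ℝ} (ha : 0 ≤ a) {ψ : ℝ → ℝ} (h : ConeF a ψ) (y : ℝ) :
    ψ y ≤ Real.exp a * ∫ x in (0:ℝ)..1, ψ x := by
  have e := h.per.intervalIntegral_add_eq 0 y
  rw [zero_add] at e
  rw [e, ← intervalIntegral.integral_const_mul]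
  have e2 : ψ y = ∫ x in y..(y+1), ψ y := by simp
  conv_lhs => rw [e2]
  apply intervalIntegral.integral_mono_on (by linarith) (by simp) ((h.cont.const_mul _).intervalIntegrable _ _)
  intro x hx
  refine (h.lip y x).trans ?_
  have := h.pos x
  gcongr
  have h1 : |y - x| ≤ 1 := by rw [abs_le]; constructor <;> linarith [hx.1, hx.2]
  nlinarith

lemma ConeF.lower {a : ℝ} (ha : 0 ≤ a) {ψ : ℝ → ℝ} (h : ConeF a ψ) (y : ℝ) :
    Real.exp (-a) * (∫ x in (0:ℝ)..1, ψ x) ≤ ψ y := by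
  have e := h.per.intervalIntegral_add_eq 0 y
  rw [zero_add] at e
  rw [e, ← intervalIntegral.integral_const_mul]
  have e2 : ψ y = ∫ x in y..(y+1), ψ y := by simp
  conv_rhs => rw [e2]
  apply intervalIntegral.integral_mono_on (by linarith) ((h.cont.const_mul _).intervalIntegrable _ _) (by simp)
  intro x hx
  have h2 := h.lip x y
  have := h.pos y
  have h1 : |x - y| ≤ 1 := by rw [abs_le]; constructor <;> linarith [hx.1, hx.2]
  calc Real.exp (-a) * ψ x ≤ Real.exp (-a) * (Real.exp a * ψ y) := by
        gcongr
        refine h2.trans ?_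
        gcongr
        nlinarith
    _ = ψ y := by rw [← mul_assoc, ← Real.exp_add]; simp

lemma ConeF.integral_pos {a : ℝ} {ψ : ℝ → ℝ} (h : ConeF a ψ) : 0 < ∫ x in (0:ℝ)..1, ψ x :=
  intervalIntegral.intervalIntegral_pos_of_pos (h.cont.intervalIntegrable _ _) h.pos (by norm_num)

lemma ConeF.mono {a b : ℝ} {ψ : ℝ → ℝ} (h : ConeF a ψ) (hab : a ≤ b) : ConeF b ψ :=
  ⟨h.per, h.cont, h.pos, fun x y => (h.lip x y).trans (by have := h.pos y; gcongr)⟩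

lemma ConeF.sub {a a' : ℝ} (ha : 0 < a) (haa : a < a') {ψ : ℝ → ℝ} (h : ConeF a ψ) {m : ℝ} 
    (hm : ∀ x, m ≤ ψ x) (hm0 : 0 < m) :
    ConeF a' (fun x => ψ x - m * (1 - a / a')) := by
  have ha' : 0 < a' := by linarith
  have hr : a / a' < 1 := by rw [div_lt_one ha']; exact haa
  have hr0 : 0 < a / a' := by positivity
  refine ⟨fun x => by simp only [h.per x], by have := h.cont; fun_prop, fun x => ?_, fun x y => ?_⟩
  · have := hm x
    nlinarith
  · set D := |x - y|
    have hD : 0 ≤ D := abs_nonneg _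
    have h1 := h.lip x y
    have hc : Real.exp (a * D) ≤ 1 + (a / a') * (Real.exp (a' * D) - 1) := by
      have := convexOn_exp.2 (mem_univ (a' * D)) (mem_univ (0:ℝ)) hr0.le (by linarith : 0 ≤ 1 - a / a') (by ring)
      simp only [smul_eq_mul, mul_zero, add_zero, Real.exp_zero, mul_one] at this
      have e : a / a' * (a' * D) = a * D := by field_simp
      rw [e] at this
      linarith
    have hE : 1 ≤ Real.exp (a' * D) := Real.one_le_exp (by positivity)
    have hy := hm y
    have hyp := h.pos y
    have k1 : Real.exp (a * D) * ψ y ≤ (1 + (a / a') * (Real.exp (a' * D) - 1)) * ψ y := by gcongr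
    have k2 : 0 ≤ (1 - a / a') * (Real.exp (a' * D) - 1) * (ψ y - m) := by
      apply mul_nonneg (mul_nonneg _ _) <;> linarith
    nlinarith

lemma liftIter_add {lam Astar : ℝ} (Ts : ℕ → CM lam Astar) (k j : ℕ) (x : ℝ) :
    liftIter Ts (k + j) x = liftIter (fun i => Ts (i + k)) j (liftIter Ts k x) := by
  induction j with
  | zero => rfl
  | succ j ih =>
    rw [← add_assoc]
    simp only [liftIter, Function.comp, ih]
    rw [show k + j + 1 = j + 1 + k by ring]
 
lemma liftIter_cont {lam Astar : ℝ} (Ts : ℕ → CM lam Astar) (k : ℕ) : Continuous (liftIter Ts k) := by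
  induction k with
  | zero => exact continuous_id
  | succ k ih => exact (Ts (k+1)).cont.comp ih

lemma CM.per_comp {lam Astar : ℝ} (T : CM lam Astar) {φ : ℝ → ℝ} (h : Function.Periodic φ 1) :
    Function.Periodic (fun x => φ (T.F x)) 1 := by
  intro x
  simp only [T.lift_add_one]
  have := h.int_mul T.deg (T.F x)
  simpa using this

lemma liftIter_per {lam Astar : ℝ} (Ts : ℕ → CM lam Astar) (k : ℕ) {φ : ℝ → ℝ} (h : Function.Periodic φ 1) :
    Function.Periodic (fun x => φ (liftIter Ts k x)) 1 := by
  induction k generalizing φ with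
  | zero => exact h
  | succ k ih => exact ih (φ := fun x => φ ((Ts (k+1)).F x)) ((Ts (k+1)).per_comp h)

/-- Memory loss in dual form. -/
lemma memory_loss {lam Astar : ℝ} (hlam : 1 < lam) (hA : 0 < Astar) {a a' : ℝ} (ha : 0 < a) (haa : a < a')
    (hfix : a' / lam + Astar / lam ^ 2 ≤ a) (n : ℕ) : ∀ (Ts : ℕ → CM lam Astar) (ψ₁ ψ₂ : ℝ → ℝ) (_ : ConeF a' ψ₁) (_ : ConeF a' ψ₂)
    (_ : (∫ x in (0:ℝ)..1, ψ₁ x) = ∫ x in (0:ℝ)..1, ψ₂ x) (φ : ℝ → ℝ) (_ : Continuous φ) (_ : Function.Periodic φ 1),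
    |∫ x in (0:ℝ)..1, (ψ₁ x - ψ₂ x) * φ (liftIter Ts n x)| ≤
      Real.exp a' * (∫ x in (0:ℝ)..1, ψ₁ x) * (1 - Real.exp (-a) * (1 - a / a')) ^ n * ∫ x in (0:ℝ)..1, |φ x| := by
  have ha' : 0 < a' := by linarith
  induction n with
  | zero =>
    intro Ts ψ₁ ψ₂ h1 h2 hm φ hφ hp
    simp only [liftIter, id, pow_zero, mul_one]
    rw [← intervalIntegral.integral_const_mul]
    refine (intervalIntegral.abs_integral_le_integral_abs (by norm_num)).trans ?_
    apply intervalIntegral.integral_mono_on (by norm_num)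
    · apply Continuous.intervalIntegrable; have := h1.cont; have := h2.cont; fun_prop
    · apply Continuous.intervalIntegrable; fun_prop
    intro x _
    rw [abs_mul]
    gcongr
    have := h1.pos x
    have := h2.pos x
    have := h1.upper ha'.le x
    have := h2.upper ha'.le x
    rw [← hm] at this
    rw [abs_le]; constructor <;> linarith
  | succ n ih =>
    intro Ts ψ₁ ψ₂ h1 h2 hm φ hφ hp
    obtain ⟨χ₁, c1, d1⟩ := (Ts 1).transfer_cone hlam hA ha'.le h1
    obtain ⟨χ₂, c2, d2⟩ := (Ts 1).transfer_cone hlam hA ha'.le h2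
    replace c1 := c1.mono hfix
    replace c2 := c2.mono hfix
    set m := ∫ x in (0:ℝ)..1, ψ₁ x with hmdef
    have m1 : ∫ x in (0:ℝ)..1, χ₁ x = m := by
      have := d1 (fun _ => 1) continuous_const (fun _ => rfl)
      simp only [mul_one] at this; exact this.symm
    have m2 : ∫ x in (0:ℝ)..1, χ₂ x = m := by
      have := d2 (fun _ => 1) continuous_const (fun _ => rfl)
      simp only [mul_one] at this; rw [← this, hm]
    have hmp : 0 < m := h1.integral_pos
    have l1 := c1.lower ha.le
    have l2 := c2.lower ha.le
    rw [m1] at l1; rw [m2] at l2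
    have s1 := c1.sub ha haa l1 (by positivity)
    have s2 := c2.sub ha haa l2 (by positivity)
    have i1 : ∫ x in (0:ℝ)..1, (χ₁ x - Real.exp (-a) * m * (1 - a / a')) = m * (1 - Real.exp (-a) * (1 - a / a')) := by
      rw [intervalIntegral.integral_sub (c1.cont.intervalIntegrable _ _) (by simp), m1]; simp; ring
    have i2 : ∫ x in (0:ℝ)..1, (χ₂ x - Real.exp (-a) * m * (1 - a / a')) = m * (1 - Real.exp (-a) * (1 - a / a')) := by
      rw [intervalIntegral.integral_sub (c2.cont.intervalIntegrable _ _) (by simp), m2]; simp; ring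
    have key := ih (fun i => Ts (i + 1)) _ _ s1 s2 (by rw [i1, i2]) φ hφ hp
    rw [i1] at key
    have hperφ := liftIter_per (fun i => Ts (i + 1)) n hp
    have hcφ : Continuous (fun x => φ (liftIter (fun i => Ts (i + 1)) n x)) := hφ.comp (liftIter_cont _ _)
    have q1 := d1 _ hcφ hperφ
    have q2 := d2 _ hcφ hperφ
    have e : ∫ x in (0:ℝ)..1, (ψ₁ x - ψ₂ x) * φ (liftIter Ts (n+1) x) =
        ∫ x in (0:ℝ)..1, ((χ₁ x - Real.exp (-a) * m * (1 - a / a')) - (χ₂ x - Real.exp (-a) * m * (1 - a / a'))) * φ (liftIter (fun i => Ts (i + 1)) n x) := by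
      have hF := (Ts 1).cont
      have k1 := h1.cont
      have k2 := h2.cont
      have k3 := c1.cont
      have k4 := c2.cont
      have k5 := liftIter_cont (fun i => Ts (i + 1)) n
      have hcφ' : Continuous (fun x => φ (liftIter (fun i => Ts (i + 1)) n ((Ts 1).F x))) := hcφ.comp hF
      have hl : ∀ x, liftIter Ts (n+1) x = liftIter (fun i => Ts (i + 1)) n ((Ts 1).F x) := fun x => by
        rw [add_comm n 1, liftIter_add]; rfl
      simp only [hl, sub_sub_sub_cancel_right]
      simp only [sub_mul]
      rw [intervalIntegral.integral_sub, intervalIntegral.integral_sub, q1, q2] <;>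
      · apply Continuous.intervalIntegrable
        fun_prop
    rw [e]
    refine key.trans (le_of_eq ?_)
    ring

lemma exists_density {lam Astar : ℝ} (hlam : 1 < lam) (hA : 0 < Astar) {a a' : ℝ} (ha : 0 < a) (haa : a < a')
    (hfix : a' / lam + Astar / lam ^ 2 ≤ a) (Ts : ℕ → CM lam Astar) (n : ℕ) : ∃ ρ, ConeF a ρ ∧ 
    ∀ φ : ℝ → ℝ, Continuous φ → Function.Periodic φ 1 →
      ∫ x in (0:ℝ)..1, φ (liftIter Ts n x) = ∫ x in (0:ℝ)..1, ρ x * φ x := by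
  induction n with
  | zero => exact ⟨fun _ => 1, ⟨fun _ => rfl, continuous_const, fun _ => one_pos, fun x y => by
      rw [mul_one]; exact Real.one_le_exp (by positivity)⟩, fun φ _ _ => by simp [liftIter]⟩
  | succ n ih =>
    obtain ⟨ρ, h1, h2⟩ := ih
    obtain ⟨χ, c, d⟩ := (Ts (n+1)).transfer_cone hlam hA (ha.trans haa).le (h1.mono haa.le)
    refine ⟨χ, c.mono hfix, fun φ hφ hp => ?_⟩
    rw [← d φ hφ hp, ← h2 (fun x => φ ((Ts (n+1)).F x)) (hφ.comp (Ts (n+1)).cont) ((Ts (n+1)).per_comp hp)]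
    rfl

/-- Mixing of Lipschitz observables against functions of the future. -/
lemma mixing {lam Astar : ℝ} (hlam : 1 < lam) (hA : 0 < Astar) {K B : ℝ} (hK : 0 ≤ K) (hB : 0 < B) :
    ∃ C θ : ℝ, 0 < C ∧ 0 < θ ∧ θ < 1 ∧ ∀ (Ts : ℕ → CM lam Astar) (k j : ℕ) (g : ℝ → ℝ) (_ : Function.Periodic g 1)
      (_ : ∀ x y, |g x - g y| ≤ K * |x - y|) (_ : ∀ x, |g x| ≤ B) (_ : ∫ x in (0:ℝ)..1, g (liftIter Ts k x) = 0)
      (φ : ℝ → ℝ) (_ : Continuous φ) (_ : Function.Periodic φ 1),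
      |∫ x in (0:ℝ)..1, g (liftIter Ts k x) * φ (liftIter Ts (k + j) x)| ≤ 
        C * θ ^ j * ∫ x in (0:ℝ)..1, |φ (liftIter Ts (k + j) x)| := by
  have hl0 : 0 < lam := by linarith
  have hl1 : 0 < lam - 1 := by linarith
  obtain ⟨b, hb⟩ : ∃ b, b = Astar / lam ^ 2 := ⟨_, rfl⟩
  have hb0 : 0 < b := by rw [hb]; positivity
  obtain ⟨a, ha⟩ : ∃ a, a = 2 * b * lam / (lam - 1) := ⟨_, rfl⟩
  have ha0 : 0 < a := by rw [ha]; positivity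
  obtain ⟨a', ha'⟩ : ∃ a', a' = a + b * lam := ⟨_, rfl⟩
  have haa : a < a' := by rw [ha']; have := mul_pos hb0 hl0; linarith
  have hfix : a' / lam + Astar / lam ^ 2 ≤ a := by
    rw [← hb, ha', ha]
    apply le_of_eq
    field_simp
    ring
  have ha'0 : 0 < a' := by linarith
  have hr : a / a' < 1 := by rw [div_lt_one ha'0]; exact haa
  have hr0 : 0 < a / a' := by positivity
  obtain ⟨M, hM⟩ : ∃ M, M = 2 * B + 2 * K / (a' - a) := ⟨_, rfl⟩
  have hs : 0 < a' - a := by linarith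
  have hM0 : 0 < M := by rw [hM]; positivity
  have hM1 : 2 * B ≤ M := by rw [hM]; have : 0 ≤ 2 * K / (a' - a) := by positivity
                             linarith
  have hM2 : 2 * K / M ≤ a' - a := by
    rw [div_le_iff₀ hM0, ← div_le_iff₀' hs, hM]; linarith
  have hexp : Real.exp (-a) < 1 := by rw [Real.exp_lt_one_iff]; linarith
  have hexp0 := Real.exp_pos (-a)
  refine ⟨M * Real.exp a' * Real.exp a, 1 - Real.exp (-a) * (1 - a / a'), by positivity, by nlinarith, by nlinarith, ?_⟩
  intro Ts k j g hgp hgl hgB hg0 φ hφ hp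
  have hgc : Continuous g := by
    have : LipschitzWith (Real.toNNReal K) g := LipschitzWith.of_dist_le_mul (fun x y => by
      rw [Real.dist_eq, Real.dist_eq, Real.coe_toNNReal K hK]; exact hgl x y)
    exact this.continuous
  obtain ⟨ρ, hρ, hρd⟩ := exists_density hlam hA ha0 haa hfix Ts k
  obtain ⟨σ, hσ, hσd⟩ := exists_density hlam hA ha0 haa hfix Ts (k + j)
  have hρ1 : ∫ x in (0:ℝ)..1, ρ x = 1 := by
    have := hρd (fun _ => 1) continuous_const (fun _ => rfl)
    simp at this; exact this.symm
  have hσ1 : ∫ x in (0:ℝ)..1, σ x = 1 := by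
    have := hσd (fun _ => 1) continuous_const (fun _ => rfl)
    simp at this; exact this.symm
  have hhalf : ∀ x, 1 / 2 ≤ 1 + g x / M := by
    intro x
    have : -(1/2) ≤ g x / M := by
      rw [le_div_iff₀ hM0]
      have := (abs_le.1 (hgB x)).1
      linarith
    linarith
  have c1 : ConeF a' (fun x => ρ x * (1 + g x / M)) := by
    refine ⟨fun x => by simp only [hρ.per x, hgp x], by have := hρ.cont; fun_prop, fun x => mul_pos (hρ.pos x) (by linarith [hhalf x]), ?_⟩
    intro x y
    have h1 := hρ.lip x y
    have h2 : 1 + g x / M ≤ Real.exp ((a' - a) * |x - y|) * (1 + g y / M) := by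
      have q1 := (abs_le.1 (hgl x y)).2
      have q2 : g x / M ≤ g y / M + K * |x - y| / M := by
        rw [← add_div]; gcongr; linarith
      have q3 : 2 * K / M * |x - y| + 1 ≤ Real.exp ((a' - a) * |x - y|) :=
        (Real.add_one_le_exp _).trans (by gcongr)
      have q4 := hhalf y
      have q5 : 0 ≤ K * |x - y| / M := by positivity
      calc 1 + g x / M ≤ 1 + g y / M + K * |x - y| / M := by linarith
        _ ≤ (2 * K / M * |x - y| + 1) * (1 + g y / M) := by
          have : 2 * K / M * |x - y| = 2 * (K * |x - y| / M) := by ring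
          rw [this]; nlinarith
        _ ≤ _ := by gcongr
    calc ρ x * (1 + g x / M) ≤ (Real.exp (a * |x - y|) * ρ y) * (Real.exp ((a' - a) * |x - y|) * (1 + g y / M)) := by
          have := hρ.pos y
          gcongr
          linarith [hhalf x]
      _ = _ := by
        rw [show a' * |x - y| = a * |x - y| + (a' - a) * |x - y| by ring, Real.exp_add]; ring
  have hρc := hρ.cont
  have im : ∫ x in (0:ℝ)..1, ρ x * (1 + g x / M) = ∫ x in (0:ℝ)..1, ρ x := by
    have e : ∀ x, ρ x * (1 + g x / M) = ρ x + (ρ x * g x) / M := fun x => by ring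
    simp only [e]
    rw [intervalIntegral.integral_add, intervalIntegral.integral_div, ← hρd g hgc hgp, hg0]
    · simp
    all_goals
      apply Continuous.intervalIntegrable
      fun_prop
  have key := memory_loss hlam hA ha0 haa hfix j (fun i => Ts (i + k)) _ _ c1 (hρ.mono haa.le) im φ hφ hp
  rw [im, hρ1] at key
  have e1 : ∫ x in (0:ℝ)..1, g (liftIter Ts k x) * φ (liftIter Ts (k + j) x) = 
      M * ∫ x in (0:ℝ)..1, (ρ x * (1 + g x / M) - ρ x) * φ (liftIter (fun i => Ts (i + k)) j x) := by
    simp only [liftIter_add]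
    have hc2 : Continuous (fun x => φ (liftIter (fun i => Ts (i + k)) j x)) := hφ.comp (liftIter_cont _ _)
    rw [hρd (fun x => g x * φ (liftIter (fun i => Ts (i + k)) j x)) (hgc.mul hc2) (hgp.mul (liftIter_per _ _ hp)),
      ← intervalIntegral.integral_const_mul]
    congr 1; ext x
    field_simp
    ring
  have e2 : ∫ x in (0:ℝ)..1, |φ x| ≤ Real.exp a * ∫ x in (0:ℝ)..1, |φ (liftIter Ts (k + j) x)| := by
    rw [hσd (fun x => |φ x|) hφ.abs (fun x => by simp only [hp x]), ← intervalIntegral.integral_const_mul]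
    have hσc := hσ.cont
    apply intervalIntegral.integral_mono_on (by norm_num)
    · apply Continuous.intervalIntegrable; fun_prop
    · apply Continuous.intervalIntegrable; fun_prop
    intro x _
    have := hσ.lower ha0.le x
    rw [hσ1, mul_one] at this
    have h3 : 1 ≤ Real.exp a * σ x := by
      calc 1 = Real.exp a * Real.exp (-a) := by rw [← Real.exp_add]; simp
        _ ≤ _ := by gcongr
    nlinarith [abs_nonneg (φ x)]
  rw [e1, abs_mul, abs_of_pos hM0]
  have hθ : 0 ≤ 1 - Real.exp (-a) * (1 - a / a') := by nlinarith
  calc _ ≤ M * (Real.exp a' * 1 * (1 - Real.exp (-a) * (1 - a / a')) ^ j * (Real.exp a * ∫ x in (0:ℝ)..1, |φ (liftIter Ts (k + j) x)|)) := by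
        refine mul_le_mul_of_nonneg_left (key.trans ?_) hM0.le
        gcongr
    _ = _ := by ring


lemma tele_bound (N : ℕ) (u w : ℕ → ℝ) (hN : u N ≤ 0) (h : ∀ k < N, u k ≤ u (k+1) + w k) :
    ∀ k ≤ N, u k ≤ ∑ j ∈ Finset.Ico k N, w j := by
  intro k hk
  induction hk using Nat.decreasingInduction with
  | self => simpa using hN
  | of_succ k hk ih =>
    rw [Finset.sum_eq_sum_Ico_succ_bot hk]
    linarith [h k hk]

lemma geo_bound {θ : ℝ} (h0 : 0 < θ) (h1 : θ < 1) (k N : ℕ) :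
    ∑ j ∈ Finset.Ico (k+1) N, θ ^ (j - k) ≤ 1 / (1 - θ) := by
  have : ∑ j ∈ Finset.Ico (k+1) N, θ ^ (j - k) ≤ ∑ j ∈ Finset.Ico k N, θ ^ (j - k) :=
    Finset.sum_le_sum_of_subset_of_nonneg (Finset.Ico_subset_Ico_left (by omega)) (fun _ _ _ => by positivity)
  refine this.trans ?_
  rw [Finset.sum_Ico_eq_sum_range]
  simp only [add_tsub_cancel_left]
  rw [one_div, ← tsum_geometric_of_lt_one h0.le h1]
  exact (summable_geometric_of_lt_one h0.le h1).sum_le_tsum _ (fun _ _ => by positivity)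

lemma fourth_moment {Ω : Type*} [TopologicalSpace Ω] [CompactSpace Ω] (E : C(Ω, ℝ) →ₗ[ℝ] ℝ)
    (hE1 : E 1 = 1) (hEm : ∀ Φ Ψ : C(Ω, ℝ), (∀ ω, Φ ω ≤ Ψ ω) → E Φ ≤ E Ψ)
    (𝒜 : ℕ → Subalgebra ℝ C(Ω, ℝ)) (h𝒜 : Antitone 𝒜) (X : ℕ → C(Ω, ℝ)) (hX : ∀ i, X i ∈ 𝒜 i)
    {B C θ : ℝ} (hB : 0 < B) (hC : 0 < C) (h0 : 0 < θ) (h1 : θ < 1)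
    (hXB : ∀ i ω, |X i ω| ≤ B) 
    (mix : ∀ k i, k ≤ i → ∀ Φ ∈ 𝒜 i, |E (X k * Φ)| ≤ C * θ ^ (i - k) * E |Φ|)
    (N : ℕ) (c : ℕ → ℝ) (hc0 : ∀ i, 0 ≤ c i) (hc1 : ∀ i, c i ≤ 1) :
    E ((∑ j ∈ Finset.range N, c j • X j) ^ 4) ≤ 
      (B ^ 4 + (4 * (C * (B * (3 * (B ^ 2 + 2 * (C * B * (1 / (1 - θ)))) + 4 * B ^ 2)) * (1 / (1 - θ)))
        + 6 * B ^ 2 * (B ^ 2 + 2 * (C * B * (1 / (1 - θ)))) + 4 * B ^ 4 + B ^ 4)) * (∑ j ∈ Finset.range N, c j) ^ 2 := by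
  obtain ⟨S, hS⟩ : ∃ S : ℕ → C(Ω, ℝ), S = fun k => ∑ j ∈ Finset.Ico k N, c j • X j := ⟨_, rfl⟩
  obtain ⟨W, hW⟩ : ∃ W, W = ∑ j ∈ Finset.range N, c j := ⟨_, rfl⟩
  obtain ⟨D, hD⟩ : ∃ D, D = B ^ 2 + 2 * (C * B * (1 / (1 - θ))) := ⟨_, rfl⟩
  have hθ : 0 < 1 / (1 - θ) := by have : 0 < 1 - θ := by linarith
                                  positivity
  have hD0 : 0 < D := by rw [hD]; positivity
  have hW0 : 0 ≤ W := by rw [hW]; exact Finset.sum_nonneg (fun i _ => hc0 i)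
  rw [Finset.range_eq_Ico, ← congrFun hS 0, ← Finset.range_eq_Ico, ← hW, ← hD]
  have hSN : S N = 0 := by simp [hS]
  have hSs : ∀ k < N, S k = c k • X k + S (k+1) := by
    intro k hk; simp only [hS]; rw [Finset.sum_eq_sum_Ico_succ_bot hk]
  have hSA : ∀ k, S k ∈ 𝒜 k := by
    intro k; simp only [hS]
    refine Subalgebra.sum_mem _ (fun j hj => Subalgebra.smul_mem _ (h𝒜 (Finset.mem_Ico.1 hj).1 (hX j)) _)
  have hWk : ∀ k, ∑ j ∈ Finset.Ico k N, c j ≤ W := by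
    intro k; rw [hW, Finset.range_eq_Ico]
    exact Finset.sum_le_sum_of_subset_of_nonneg (Finset.Ico_subset_Ico_left (by omega)) (fun i _ _ => hc0 i)
  have hcX : ∀ k ω, |c k * X k ω| ≤ c k * B := by
    intro k ω; rw [abs_mul, abs_of_nonneg (hc0 k)]
    exact mul_le_mul_of_nonneg_left (hXB k ω) (hc0 k)
  have hcX' : ∀ k ω, |c k * X k ω| ≤ B := fun k ω => (hcX k ω).trans (by nlinarith [hc0 k, hc1 k])
  have hSB : ∀ k ω, |S k ω| ≤ B * W := by
    intro k ω; simp only [hS]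
    rw [ContinuousMap.sum_apply]
    calc _ ≤ ∑ j ∈ Finset.Ico k N, |(c j • X j) ω| := Finset.abs_sum_le_sum_abs _ _
      _ ≤ ∑ j ∈ Finset.Ico k N, c j * B := Finset.sum_le_sum (fun j _ => hcX j ω)
      _ = B * ∑ j ∈ Finset.Ico k N, c j := by rw [← Finset.sum_mul, mul_comm]
      _ ≤ _ := by gcongr; exact hWk k
  -- constants
  have hEc : ∀ r : ℝ, E (r • 1) = r := fun r => by rw [map_smul, hE1]; simp
  have habs : ∀ (Φ Ψ : C(Ω, ℝ)), (∀ ω, |Φ ω| ≤ Ψ ω) → |E Φ| ≤ E Ψ := by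
    intro Φ Ψ h
    rw [abs_le']
    exact ⟨hEm _ _ (fun ω => (le_abs_self _).trans (h ω)), by
      rw [← map_neg]; exact hEm _ _ (fun ω => (neg_le_abs _).trans (h ω))⟩
  -- second moments
  have hXS : ∀ k < N, |E (X k * S (k+1))| ≤ C * B * (1 / (1 - θ)) := by
    intro k hk
    have := tele_bound N (fun i => if i ≤ k then 0 else |E (X k * S i)|) (fun i => if i ≤ k then |E (X k * S (k+1))| else C * B * θ ^ (i - k)) 
      (by simp [hSN]) (by
        intro i hi
        by_cases hik : i ≤ k
        · have : 0 ≤ |E (X k * S (k+1))| := abs_nonneg _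
          simp only [hik, if_true]
          split_ifs <;> positivity
        · have hik' : ¬ (i + 1 ≤ k) := by omega
          simp only [hik, hik', if_false]
          have e : X k * S i = X k * S (i+1) + X k * (c i • X i) := by rw [hSs i hi]; ring
          rw [e, map_add]
          refine (abs_add_le _ _).trans ?_
          gcongr
          refine (mix k i (by omega) _ (Subalgebra.smul_mem _ (hX i) _)).trans ?_
          have e2 : E |c i • X i| ≤ B := by
            rw [← hEc B]; apply hEm; intro ω
            simpa using hcX' i ω
          have : 0 ≤ C * θ ^ (i - k) := by positivity
          nlinarith)
      (k+1) (by omega)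
    simp only [show ¬ (k + 1 ≤ k) by omega, if_false] at this
    refine this.trans ?_
    rw [Finset.sum_congr rfl (g := fun i => C * B * θ ^ (i - k))]
    · rw [← Finset.mul_sum]
      gcongr
      exact geo_bound h0 h1 k N
    · intro i hi
      have := (Finset.mem_Ico.1 hi).1
      rw [if_neg (by omega)]
  have hS2 : ∀ k ≤ N, E (S k ^ 2) ≤ D * W := by
    intro k hk
    have := tele_bound N (fun i => E (S i ^ 2)) (fun i => D * c i) (by simp [hSN]) (by
      intro i hi
      have e : S i ^ 2 = S (i+1) ^ 2 + ((c i • X i) ^ 2 + (2 * c i) • (X i * S (i+1))) := by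
        rw [hSs i hi]; ext ω; simp; ring
      rw [e, map_add, map_add, map_smul]
      have q1 : E ((c i • X i) ^ 2) ≤ B ^ 2 * c i := by
        rw [← hEc (B ^ 2 * c i)]; apply hEm; intro ω
        have a1 := hcX i ω
        have a2 := hcX' i ω
        have a3 : (c i * X i ω) ^ 2 ≤ B ^ 2 * c i := by
          rw [← sq_abs]
          nlinarith [abs_nonneg (c i * X i ω)]
        simpa using a3
      have q2 := (abs_le.1 (hXS i hi)).2
      have q3 : (2 * c i) • E (X i * S (i+1)) ≤ 2 * c i * (C * B * (1 / (1 - θ))) := by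
        rw [smul_eq_mul]
        have := hc0 i
        gcongr
      rw [hD]; linarith) k hk
    refine this.trans ?_
    rw [← Finset.mul_sum]
    gcongr
    exact hWk k
  rcases lt_or_ge W 1 with hW1 | hW1
  · have q : E (S 0 ^ 4) ≤ (B * W) ^ 4 := by
      rw [← hEc ((B * W) ^ 4)]; apply hEm; intro ω
      have := hSB 0 ω
      have : |S 0 ω| ^ 4 ≤ (B * W) ^ 4 := by gcongr
      rw [Even.pow_abs (by decide)] at this
      simpa using this
    refine q.trans ?_
    rw [mul_pow]
    have h2 : W ^ 4 ≤ W ^ 2 := pow_le_pow_of_le_one hW0 hW1.le (by norm_num)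
    gcongr
    have : 0 < 4 * (C * (B * (3 * D + 4 * B ^ 2)) * (1 / (1 - θ))) + 6 * B ^ 2 * D + 4 * B ^ 4 + B ^ 4 := by positivity
    linarith
  obtain ⟨Q, hQ⟩ : ∃ Q, Q = B * (3 * D + 4 * B ^ 2) := ⟨_, rfl⟩
  have hQ0 : 0 < Q := by rw [hQ]; positivity
  rw [← hQ]
  have hXS3 : ∀ k < N, |E (X k * S (k+1) ^ 3)| ≤ C * Q * W * (1 / (1 - θ)) := by
    intro k hk
    have := tele_bound N (fun i => if i ≤ k then 0 else |E (X k * S i ^ 3)|) (fun i => if i ≤ k then |E (X k * S (k+1) ^ 3)| else C * Q * W * θ ^ (i - k)) 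
      (by simp [hSN]) (by
        intro i hi
        by_cases hik : i ≤ k
        · have : 0 ≤ |E (X k * S (k+1) ^ 3)| := abs_nonneg _
          simp only [hik, if_true]
          split_ifs <;> positivity
        · have hik' : ¬ (i + 1 ≤ k) := by omega
          simp only [hik, hik', if_false]
          have e : X k * S i ^ 3 = X k * S (i+1) ^ 3 + X k * (S i ^ 3 - S (i + 1) ^ 3) := by ring
          rw [e, map_add]
          refine (abs_add_le _ _).trans ?_
          gcongr
          refine (mix k i (by omega) _ (Subalgebra.sub_mem _ (Subalgebra.pow_mem _ (hSA i) _) (Subalgebra.pow_mem _ (h𝒜 (by omega) (hSA (i+1))) _))).trans ?_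
          have e2 : E |S i ^ 3 - S (i+1) ^ 3| ≤ Q * W := by
            have r1 : E |S i ^ 3 - S (i+1) ^ 3| ≤ E ((3 * B) • S (i+1) ^ 2 + (B * (3 * B * (B * W) + B ^ 2)) • 1) := by
              apply hEm
              intro ω
              have e3 : (S i ^ 3 - S (i+1) ^ 3) ω = (c i * X i ω) * (3 * S (i+1) ω ^ 2 + 3 * (c i * X i ω) * S (i+1) ω + (c i * X i ω) ^ 2) := by
                rw [hSs i hi]; simp; ring
              have e4 := hcX' i ω
              have e5 := hSB (i+1) ω
              rw [ContinuousMap.abs_apply, e3, abs_mul]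
              have e6 : |3 * S (i+1) ω ^ 2 + 3 * (c i * X i ω) * S (i+1) ω + (c i * X i ω) ^ 2| ≤ 3 * S (i+1) ω ^ 2 + 3 * B * (B * W) + B ^ 2 := by
                refine (abs_add_three _ _ _).trans ?_
                rw [abs_mul, abs_mul, abs_mul, abs_pow, abs_pow, sq_abs]
                simp only [abs_of_pos (show (0:ℝ) < 3 by norm_num)]
                gcongr
              calc _ ≤ B * (3 * S (i+1) ω ^ 2 + 3 * B * (B * W) + B ^ 2) := by gcongr
                _ = _ := by simp; ring
            rw [map_add, map_smul, hEc] at r1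
            have r2 := hS2 (i+1) (by omega)
            rw [smul_eq_mul] at r1
            have r3 : 3 * B * E (S (i+1) ^ 2) ≤ 3 * B * (D * W) := by gcongr
            have r4 : B * B ^ 2 ≤ B * B ^ 2 * W := le_mul_of_one_le_right (by positivity) hW1
            rw [hQ]
            nlinarith
          calc _ ≤ C * θ ^ (i - k) * (Q * W) := by gcongr
            _ = _ := by ring)
      (k+1) (by omega)
    simp only [show ¬ (k + 1 ≤ k) by omega, if_false] at this
    refine this.trans ?_
    rw [Finset.sum_congr rfl (g := fun i => C * Q * W * θ ^ (i - k))]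
    · rw [← Finset.mul_sum]
      gcongr
      exact geo_bound h0 h1 k N
    · intro i hi
      have := (Finset.mem_Ico.1 hi).1
      rw [if_neg (by omega)]
  have fin := tele_bound N (fun i => E (S i ^ 4)) (fun i => (4 * (C * Q * (1 / (1 - θ))) + 6 * B ^ 2 * D + 4 * B ^ 4 + B ^ 4) * W * c i) (by simp [hSN]) (by
      intro i hi
      have e : S i ^ 4 = S (i+1) ^ 4 + ((4 * c i) • (X i * S (i+1) ^ 3) + ((6:ℝ) • ((c i • X i) ^ 2 * S (i+1) ^ 2) + (4:ℝ) • ((c i • X i) ^ 3 * S (i+1)) + (c i • X i) ^ 4)) := by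
        rw [hSs i hi]; ext ω; simp; ring
      rw [e, map_add, map_add, map_smul, smul_eq_mul]
      have q1 := (abs_le.1 (hXS3 i hi)).2
      have hci := hc0 i
      have q2 : 4 * c i * E (X i * S (i+1) ^ 3) ≤ 4 * c i * (C * Q * W * (1 / (1 - θ))) := by gcongr
      have q3 : E ((6:ℝ) • ((c i • X i) ^ 2 * S (i+1) ^ 2) + (4:ℝ) • ((c i • X i) ^ 3 * S (i+1)) + (c i • X i) ^ 4) ≤ 
          E ((6 * (c i * B ^ 2)) • S (i+1) ^ 2 + (4 * (c i * B ^ 3 * (B * W)) + c i * B ^ 4) • 1) := by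
        apply hEm
        intro ω
        have e4 := hcX' i ω
        have e4' := hcX i ω
        have e5 := hSB (i+1) ω
        have f2 : (c i * X i ω) ^ 2 ≤ c i * B ^ 2 := by
          rw [← sq_abs, sq]
          calc _ ≤ c i * B * B := by gcongr
            _ = _ := by ring
        have f3 : (c i * X i ω) ^ 3 * S (i+1) ω ≤ c i * B ^ 3 * (B * W) := by
          refine (le_abs_self _).trans ?_
          rw [abs_mul, abs_pow]
          gcongr
          calc _ = |c i * X i ω| * |c i * X i ω| ^ 2 := by ring
            _ ≤ (c i * B) * B ^ 2 := by gcongr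
            _ = _ := by ring
        have f4 : (c i * X i ω) ^ 4 ≤ c i * B ^ 4 := by
          calc (c i * X i ω) ^ 4 = (c i * X i ω) ^ 2 * (|c i * X i ω|) ^ 2 := by rw [sq_abs]; ring
            _ ≤ (c i * B ^ 2) * B ^ 2 := by gcongr
            _ = _ := by ring
        have f5 : (c i * X i ω) ^ 2 * S (i+1) ω ^ 2 ≤ c i * B ^ 2 * S (i+1) ω ^ 2 := by gcongr
        simp
        linarith
      replace q3 := q3.trans_eq (by rw [map_add, map_smul, hEc, smul_eq_mul])
      have r2 := hS2 (i+1) (by omega)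
      have q4 : 6 * (c i * B ^ 2) * E (S (i+1) ^ 2) ≤ 6 * (c i * B ^ 2) * (D * W) := by gcongr
      have q5 : c i * B ^ 4 ≤ c i * B ^ 4 * W := le_mul_of_one_le_right (by positivity) hW1
      nlinarith) 0 (by omega)
  rw [← Finset.mul_sum, ← Finset.range_eq_Ico, ← hW] at fin
  refine fin.trans ?_
  have : 0 ≤ B ^ 4 * W ^ 2 := by positivity
  nlinarith


lemma circle_prob : IsProbabilityMeasure (volume : Measure Circle1) := ⟨by
  rw [AddCircle.measure_univ]; simp⟩

lemma circle_null (z : Circle1) : (volume : Measure Circle1) {z} = 0 := by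
  have := AddCircle.volume_closedBall (1:ℝ) (x := z) 0
  rw [Metric.closedBall_zero] at this
  rw [this]; simp

lemma circle_integral (h : Circle1 → ℝ) : ∫ x : Circle1, h x = ∫ t in (0:ℝ)..1, h (t : Circle1) := by
  have := AddCircle.intervalIntegral_preimage (1:ℝ) 0 h
  rw [zero_add] at this
  exact this.symm

lemma circle_dist (x y : ℝ) : dist (x : Circle1) (y : Circle1) ≤ |x - y| := by
  rw [dist_eq_norm, ← AddCircle.coe_sub, AddCircle.norm_eq]
  simp only [inv_one, one_mul, mul_one]
  have := round_le (x - y) 0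
  simpa using this

section
variable {lam Astar : ℝ}

lemma CM.coe_per (T : CM lam Astar) : Function.Periodic (fun t : ℝ => ((T.F t : ℝ) : Circle1)) 1 := by
  intro t
  simp only [T.lift_add_one, AddCircle.coe_add]
  have : ((T.deg : ℝ) : Circle1) = 0 := by
    rw [AddCircle.coe_eq_zero_iff]; exact ⟨T.deg, by simp⟩
  rw [this, add_zero]

lemma CM.toMap_coe (T : CM lam Astar) (t : ℝ) : T.toMap (t : Circle1) = ((T.F t : ℝ) : Circle1) := by
  have h1 : ((AddCircle.equivIco (1:ℝ) 0 (t : Circle1)) : ℝ) = t - ⌊t⌋ * 1 := by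
    have := AddCircle.coe_equivIco_mk_apply (1:ℝ) t
    rw [this, div_one, mul_one, mul_one]; rfl
  have := T.coe_per.sub_int_mul_eq (x := t) ⌊t⌋
  simp only [CM.toMap, h1]
  exact this

lemma CM.toMap_cont (T : CM lam Astar) : Continuous T.toMap := by
  rw [(QuotientAddGroup.isQuotientMap_mk (AddSubgroup.zmultiples (1:ℝ))).continuous_iff]
  have : T.toMap ∘ (QuotientAddGroup.mk : ℝ → Circle1) = fun t => ((T.F t : ℝ) : Circle1) := by
    ext t; exact T.toMap_coe t
  rw [this]
  exact (AddCircle.continuous_mk' 1).comp T.cont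

lemma arrIter_coe (Tarr : ℕ → ℕ → CM lam Astar) (n k : ℕ) (t : ℝ) :
    arrIter Tarr n k (t : Circle1) = ((liftIter (Tarr n) k t : ℝ) : Circle1) := by
  induction k with
  | zero => rfl
  | succ k ih => simp only [arrIter, liftIter, Function.comp, ih, CM.toMap_coe]

lemma arrIter_cont (Tarr : ℕ → ℕ → CM lam Astar) (n k : ℕ) : Continuous (arrIter Tarr n k) := by
  induction k with
  | zero => exact continuous_id
  | succ k ih => exact (Tarr n (k+1)).toMap_cont.comp ih

lemma circle_integrable (Φ : C(Circle1, ℝ)) : Integrable Φ (volume : Measure Circle1) := by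
  have := circle_prob
  exact Φ.continuous.integrable_of_hasCompactSupport (HasCompactSupport.of_compactSpace _)

lemma moment_circle (hlam : 1 < lam) (hA : 0 < Astar) (Tarr : ℕ → ℕ → CM lam Astar) (f : Circle1 → ℝ)
    (hf : ∃ K : NNReal, LipschitzWith K f) :
    ∃ K : ℝ, 0 < K ∧ ∀ (n N : ℕ) (c : ℕ → ℝ), (∀ i, 0 ≤ c i) → (∀ i, c i ≤ 1) →
      ∫ x : Circle1, (∑ j ∈ Finset.range N, c j * (fnk Tarr f n j x - ∫ y : Circle1, fnk Tarr f n j y)) ^ 4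
        ≤ K * (∑ j ∈ Finset.range N, c j) ^ 2 := by
  obtain ⟨Kf, hKf⟩ := hf
  have hprob := circle_prob
  have hfc : Continuous f := hKf.continuous
  obtain ⟨Bf, hBf⟩ : ∃ Bf, ∀ x, |f x| ≤ Bf := by
    obtain ⟨C, hC⟩ := isCompact_univ.exists_bound_of_continuousOn hfc.continuousOn
    exact ⟨C, fun x => hC x (mem_univ _)⟩
  have hBf0 : 0 ≤ Bf := (abs_nonneg _).trans (hBf 0)
  have hB : 0 < 2 * Bf + 1 := by linarith
  obtain ⟨C, θ, hC, h0, h1, hmix⟩ := mixing hlam hA (K := Kf) (B := 2 * Bf + 1) Kf.2 hB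
  obtain ⟨B, hBe⟩ : ∃ B, B = 2 * Bf + 1 := ⟨_, rfl⟩
  rw [← hBe] at hB
  refine ⟨B^4 + (4 * (C * (B * (3 * (B ^ 2 + 2 * (C * B * (1 / (1 - θ)))) + 4 * B ^ 2)) * (1 / (1 - θ))) + 6 * B ^ 2 * (B ^ 2 + 2 * (C * B * (1 / (1 - θ)))) + 4 * B ^ 4 + B ^ 4), ?_, fun n N c hc0 hc1 => ?_⟩
  rotate_left
  · have hfk : ∀ k, Continuous (fnk Tarr f n k) := fun k => hfc.comp (arrIter_cont Tarr n k)
    let m : ℕ → ℝ := fun k => ∫ y : Circle1, fnk Tarr f n k y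
    have hmB : ∀ k, |m k| ≤ Bf := by
      intro k
      have := norm_integral_le_of_norm_le_const (μ := (volume : Measure Circle1)) (f := fnk Tarr f n k) (C := Bf)
        (Eventually.of_forall (fun x => hBf _))
      simpa using this
    let E : C(Circle1, ℝ) →ₗ[ℝ] ℝ :=
      { toFun := fun Φ => ∫ x : Circle1, Φ x
        map_add' := fun Φ Ψ => integral_add (circle_integrable Φ) (circle_integrable Ψ)
        map_smul' := fun r Φ => integral_const_mul r _ }
    let it : ℕ → C(Circle1, Circle1) := fun k => ⟨arrIter Tarr n k, arrIter_cont Tarr n k⟩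
    let g : ℕ → C(Circle1, ℝ) := fun k => ⟨fun x => f x - m k, hfc.sub continuous_const⟩
    have key := fourth_moment E (by simp [E]) (fun Φ Ψ h => integral_mono (circle_integrable Φ) (circle_integrable Ψ) h)
      (fun i => (ContinuousMap.compRightAlgHom ℝ ℝ (it i)).range)
      (antitone_nat_of_succ_le (fun i => by
        rintro _ ⟨φ, rfl⟩
        exact ⟨φ.comp ⟨(Tarr n (i+1)).toMap, (Tarr n (i+1)).toMap_cont⟩, rfl⟩))
      (fun k => (g k).comp (it k)) (fun k => ⟨g k, rfl⟩) (B := B) hB hC h0 h1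
      (fun k x => by
        have h2 := hBf (arrIter Tarr n k x)
        have h3 := hmB k
        have : |f (arrIter Tarr n k x) - m k| ≤ B := by
          refine (abs_sub _ _).trans ?_
          linarith
        exact this)
      (by
        rintro k i hki _ ⟨φ, rfl⟩
        obtain ⟨j, rfl⟩ := Nat.exists_eq_add_of_le hki
        have hm0 : ∫ t in (0:ℝ)..1, (f ((liftIter (Tarr n) k t : ℝ) : Circle1) - m k) = 0 := by
          have e : ∫ x : Circle1, (fnk Tarr f n k x - m k) = 0 := by
            rw [integral_sub (show Integrable (fnk Tarr f n k) volume from circle_integrable ⟨_, hfk k⟩) (integrable_const (m k))]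
            simp [m]
          rw [circle_integral] at e
          simpa only [fnk, arrIter_coe] using e
        have := hmix (Tarr n) k j (fun t => f (t : Circle1) - m k) 
          (fun t => by simp only [AddCircle.coe_add_period])
          (fun x y => by
            rw [sub_sub_sub_cancel_right, ← Real.dist_eq]
            exact (hKf.dist_le_mul _ _).trans (mul_le_mul_of_nonneg_left (circle_dist x y) Kf.2))
          (fun x => by
            have h2 := hBf (x : Circle1)
            have h3 := hmB k
            refine (abs_sub _ _).trans ?_
            linarith)
          hm0 (fun t => φ (t : Circle1)) (φ.continuous.comp (AddCircle.continuous_mk' 1))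
          (fun t => by simp only [AddCircle.coe_add_period])
        rw [add_tsub_cancel_left]
        have e1 : E ((g k).comp (it k) * (ContinuousMap.compRightAlgHom ℝ ℝ (it (k + j))) φ) =
            ∫ t in (0:ℝ)..1, (f ((liftIter (Tarr n) k t : ℝ) : Circle1) - m k) * φ ((liftIter (Tarr n) (k+j) t : ℝ) : Circle1) := by
          simp only [← arrIter_coe]
          rw [← circle_integral (fun x => (f (arrIter Tarr n k x) - m k) * φ (arrIter Tarr n (k+j) x))]
          rfl
        have e2 : E |(ContinuousMap.compRightAlgHom ℝ ℝ (it (k + j))) φ| =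
            ∫ t in (0:ℝ)..1, |φ ((liftIter (Tarr n) (k+j) t : ℝ) : Circle1)| := by
          simp only [← arrIter_coe]
          rw [← circle_integral (fun x => |φ (arrIter Tarr n (k+j) x)|)]
          apply integral_congr_ae
          filter_upwards with x
          rw [ContinuousMap.abs_apply]; rfl
        erw [e1, e2]
        exact this)
      N c hc0 hc1
    refine le_trans (le_of_eq ?_) key
    apply integral_congr_ae
    filter_upwards with x
    simp [ContinuousMap.sum_apply, g, it, m, fnk]
  · have : 0 < 1 - θ := by linarith
    positivity

/-- hat weight -/
noncomputable def wt (s : ℝ) : ℝ := max 0 (min 1 s)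

lemma wt_sum (n : ℕ) (s : ℝ) (h0 : 0 ≤ s) (hn : s ≤ n) (u : ℕ → ℝ) :
    (∑ k ∈ Finset.range ⌊s⌋₊, u k) + Int.fract s * u ⌊s⌋₊ = ∑ k ∈ Finset.range (n+1), wt (s - k) * u k := by
  have hfl : ⌊s⌋₊ ≤ n := by
    have := Nat.floor_le_floor hn
    simpa using this
  have h1 : (⌊s⌋₊ : ℝ) ≤ s := Nat.floor_le h0
  have h2 : s < ⌊s⌋₊ + 1 := Nat.lt_floor_add_one s
  have hfr : Int.fract s = s - ⌊s⌋₊ := by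
    rw [Int.fract, natCast_floor_eq_intCast_floor h0]
  have e : ∑ k ∈ Finset.range (⌊s⌋₊ + 1), wt (s - k) * u k = ∑ k ∈ Finset.range (n+1), wt (s - k) * u k := by
    apply Finset.sum_subset
    · intro k hk
      simp only [Finset.mem_range] at *
      omega
    · intro k _ hk
      simp only [Finset.mem_range, not_lt] at hk
      have : ((⌊s⌋₊:ℝ)) + 1 ≤ k := by exact_mod_cast hk
      have : wt (s - k) = 0 := by
        rw [wt, min_eq_right (by linarith), max_eq_left (by linarith)]
      rw [this, zero_mul]
  rw [← e, Finset.sum_range_succ]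
  congr 1
  · apply Finset.sum_congr rfl
    intro k hk
    have : (k:ℝ) + 1 ≤ ⌊s⌋₊ := by exact_mod_cast Finset.mem_range.1 hk
    have : wt (s - k) = 1 := by
      rw [wt, min_eq_left (by linarith)]; simp
    rw [this, one_mul]
  · rw [hfr, wt, min_eq_right (by linarith), max_eq_right (by linarith)]

lemma wt_mono : Monotone wt := fun a b h => by unfold wt; gcongr

lemma wt_cont : Continuous wt := by unfold wt; fun_prop

lemma wt_nonneg (s : ℝ) : 0 ≤ wt s := le_max_left _ _

lemma wt_le (s : ℝ) : wt s ≤ 1 := max_le zero_le_one (min_le_left _ _)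

lemma zetaP_eq (Tarr : ℕ → ℕ → CM lam Astar) (f : Circle1 → ℝ) (n : ℕ) (x : Circle1) (t : ℝ) (ht : t ∈ Icc (0:ℝ) 1) :
    zetaP Tarr f n x t = (n:ℝ)⁻¹ * ∑ k ∈ Finset.range (n+1), wt (n * t - k) * fnk Tarr f n k x := by
  have hn : (0:ℝ) ≤ n := Nat.cast_nonneg n
  rw [zetaP, wt_sum n (n * t) (mul_nonneg hn ht.1) (by nlinarith [ht.2]) (fun k => fnk Tarr f n k x)]

lemma wt_sum_one (n : ℕ) (t : ℝ) (ht : t ∈ Icc (0:ℝ) 1) : ∑ k ∈ Finset.range (n+1), wt (n * t - k) = n * t := by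
  have hn : (0:ℝ) ≤ n := Nat.cast_nonneg n
  have h0 : 0 ≤ n * t := mul_nonneg hn ht.1
  have := wt_sum n (n * t) h0 (by nlinarith [ht.2]) (fun _ => 1)
  simp only [mul_one, Finset.sum_const, Finset.card_range, nsmul_eq_mul] at this
  rw [← this, natCast_floor_eq_intCast_floor h0]
  exact Int.floor_add_fract _

lemma rho_bdd {z : Circle1} {L : ℝ} (hL : 0 < L) {ρ : Circle1 → ℝ} (h : LipOnArc z L ρ) :
    ∃ R : ℝ, 0 < R ∧ ∀ᵐ x : Circle1, ρ x ≤ R := by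
  obtain ⟨x0, hx0⟩ : ∃ x0, x0 ≠ z := by
    by_contra hcon
    push Not at hcon
    have h1 : (univ : Set Circle1) = {z} := by ext x; simp [hcon x]
    have h2 := circle_null z
    rw [← h1, AddCircle.measure_univ] at h2
    simp at h2
  refine ⟨|ρ x0| + L, by positivity, ?_⟩
  have : ∀ᵐ x : Circle1, x ≠ z := by
    rw [ae_iff]; simpa using circle_null z
  filter_upwards [this] with x hx
  have h1 := h x x0 hx hx0
  have h2 : arcDist z x x0 ≤ 1 := by
    unfold arcDist arcCoord
    have a1 := (AddCircle.equivIoc 1 (zrep z) x).2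
    have a2 := (AddCircle.equivIoc 1 (zrep z) x0).2
    rw [abs_le]; constructor <;> linarith [a1.1, a1.2, a2.1, a2.2]
  have h3 := (abs_le.1 h1).2
  have h4 := le_abs_self (ρ x0)
  nlinarith

lemma rho_integrable {ρ : Circle1 → ℝ} (hρ : IsProbDensity ρ) {Φ : Circle1 → ℝ} (hΦ : Continuous Φ) :
    Integrable (fun x => Φ x * ρ x) (volume : Measure Circle1) := by
  obtain ⟨C, hC⟩ := isCompact_univ.exists_bound_of_continuousOn hΦ.continuousOn
  exact hρ.1.bdd_mul hΦ.aestronglyMeasurable (Eventually.of_forall (fun x => hC x (mem_univ _)))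

lemma fnk_cont (Tarr : ℕ → ℕ → CM lam Astar) {f : Circle1 → ℝ} (hf : Continuous f) (n k : ℕ) :
    Continuous (fnk Tarr f n k) := hf.comp (arrIter_cont Tarr n k)

lemma zetaP_cont (Tarr : ℕ → ℕ → CM lam Astar) {f : Circle1 → ℝ} (hf : Continuous f) (n : ℕ) (t : ℝ) :
    Continuous (fun x => zetaP Tarr f n x t) := by
  have := fnk_cont Tarr hf n
  unfold zetaP
  fun_prop

lemma xiD_cont (Tarr : ℕ → ℕ → CM lam Astar) {f : Circle1 → ℝ} (hf : Continuous f) (ρ : Circle1 → ℝ) (n : ℕ) (t : ℝ) :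
    Continuous (fun x => xiD Tarr f ρ n x t) := by
  have := zetaP_cont Tarr hf n t
  unfold xiD
  fun_prop

set_option maxHeartbeats 800000 in
lemma xi_moment (hlam : 1 < lam) (hA : 0 < Astar) (Tarr : ℕ → ℕ → CM lam Astar) (f : Circle1 → ℝ)
    (hf : ∃ K : NNReal, LipschitzWith K f) (L : ℝ) (hL : 0 < L) (z : Circle1) (ρ : Circle1 → ℝ)
    (hρ : IsProbDensity ρ) (hρlip : LipOnArc z L ρ) :
    ∃ K : ℝ, 0 < K ∧ ∀ n : ℕ, 1 ≤ n →
      ∀ t₁ ∈ Set.Icc (0 : ℝ) 1, ∀ t₂ ∈ Set.Icc (0 : ℝ) 1,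
        (∫ x : Circle1, |xiD Tarr f ρ n x t₂ - xiD Tarr f ρ n x t₁| ^ 4 * ρ x) ≤
          K * |t₂ - t₁| ^ 2 := by
  obtain ⟨K, hK, hmom⟩ := moment_circle hlam hA Tarr f hf
  obtain ⟨R, hR, hρR⟩ := rho_bdd hL hρlip
  have hfc : Continuous f := hf.choose_spec.continuous
  have hprob := circle_prob
  refine ⟨16 * R * K, by positivity, ?_⟩
  have key : ∀ n : ℕ, 1 ≤ n → ∀ t₁ ∈ Set.Icc (0 : ℝ) 1, ∀ t₂ ∈ Set.Icc (0 : ℝ) 1, t₁ ≤ t₂ → 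
      (∫ x : Circle1, |xiD Tarr f ρ n x t₂ - xiD Tarr f ρ n x t₁| ^ 4 * ρ x) ≤ 16 * R * K * |t₂ - t₁| ^ 2 := by
    intro n hn t₁ h₁ t₂ h₂ h12
    have hn0 : (0:ℝ) < n := by exact_mod_cast hn
    obtain ⟨c, hc⟩ : ∃ c : ℕ → ℝ, c = fun k : ℕ => wt (n * t₂ - (k:ℝ)) - wt (n * t₁ - (k:ℝ)) := ⟨_, rfl⟩
    have hc0 : ∀ i, 0 ≤ c i := fun i => by
      rw [hc]; exact sub_nonneg.2 (wt_mono (by gcongr))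
    have hc1 : ∀ i, c i ≤ 1 := fun i => by
      rw [hc]; have := wt_nonneg (n * t₁ - i); have := wt_le (n * t₂ - i); simp only; linarith
    have hcs : ∑ k ∈ Finset.range (n+1), c k = n * (t₂ - t₁) := by
      rw [hc, Finset.sum_sub_distrib, wt_sum_one n t₂ h₂, wt_sum_one n t₁ h₁]; ring
    obtain ⟨S, hS⟩ : ∃ S : Circle1 → ℝ, S = fun x => ∑ j ∈ Finset.range (n+1), c j * (fnk Tarr f n j x - ∫ y : Circle1, fnk Tarr f n j y) := ⟨_, rfl⟩
    have hm := hmom n (n+1) c hc0 hc1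
    have hfk := fnk_cont Tarr hfc n
    have hSc : Continuous S := by rw [hS]; fun_prop
    obtain ⟨D, hD⟩ : ∃ D : Circle1 → ℝ, D = fun x => ∑ j ∈ Finset.range (n+1), c j * fnk Tarr f n j x := ⟨_, rfl⟩
    have hDc : Continuous D := by rw [hD]; fun_prop
    obtain ⟨κ, hκ⟩ : ∃ κ : ℝ, κ = ∑ j ∈ Finset.range (n+1), c j * ∫ y : Circle1, fnk Tarr f n j y := ⟨_, rfl⟩
    have hSD : ∀ x, S x = D x - κ := by
      intro x
      rw [hS, hD, hκ, ← Finset.sum_sub_distrib]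
      exact Finset.sum_congr rfl (fun j _ => by ring)
    have hz : ∀ x, zetaP Tarr f n x t₂ - zetaP Tarr f n x t₁ = (n:ℝ)⁻¹ * D x := by
      intro x
      rw [zetaP_eq _ _ _ _ _ h₁, zetaP_eq _ _ _ _ _ h₂, ← mul_sub, ← Finset.sum_sub_distrib, hD, hc]
      congr 1
      exact Finset.sum_congr rfl (fun j _ => by ring)
    have hzm : zetaMean Tarr f ρ n t₂ - zetaMean Tarr f ρ n t₁ = (n:ℝ)⁻¹ * ∫ x, D x * ρ x := by
      rw [zetaMean, zetaMean, ← integral_sub (rho_integrable hρ (zetaP_cont Tarr hfc n t₂)) (rho_integrable hρ (zetaP_cont Tarr hfc n t₁)),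
        ← integral_const_mul]
      congr 1; ext x
      rw [← sub_mul, hz]; ring
    obtain ⟨M, hM⟩ : ∃ M : ℝ, M = ∫ x, S x * ρ x := ⟨_, rfl⟩
    have hMD : M = (∫ x, D x * ρ x) - κ := by
      have : (∫ x, S x * ρ x) = ∫ x, (D x * ρ x - κ * ρ x) := by
        congr 1; ext x; rw [hSD]; ring
      rw [hM, this, integral_sub (rho_integrable hρ hDc) (hρ.1.const_mul κ), integral_const_mul, hρ.2.1, mul_one]
    have hxi : ∀ x, xiD Tarr f ρ n x t₂ - xiD Tarr f ρ n x t₁ = (Real.sqrt n * (n:ℝ)⁻¹) * (S x - M) := by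
      intro x
      have : xiD Tarr f ρ n x t₂ - xiD Tarr f ρ n x t₁ = Real.sqrt n * ((zetaP Tarr f n x t₂ - zetaP Tarr f n x t₁) - (zetaMean Tarr f ρ n t₂ - zetaMean Tarr f ρ n t₁)) := by
        unfold xiD; ring
      rw [this, hz, hzm, hSD, hMD]; ring
    have hsq : (Real.sqrt n * (n:ℝ)⁻¹)^4 = ((n:ℝ)⁻¹)^2 := by
      have := Real.sq_sqrt hn0.le
      have e : (Real.sqrt n * (n:ℝ)⁻¹)^4 = (Real.sqrt n ^ 2)^2 * (n:ℝ)⁻¹^4 := by ring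
      rw [e, this]; field_simp
    have hI4 : Integrable (fun x => S x ^ 4 * ρ x) (volume : Measure Circle1) := rho_integrable hρ (hSc.pow 4)
    have hI1 : Integrable (fun x => S x * ρ x) (volume : Measure Circle1) := rho_integrable hρ hSc
    have hM4 : M ^ 4 ≤ ∫ x, S x ^ 4 * ρ x := by
      have i1 : Integrable (fun x => (4 * M^3) * (S x * ρ x)) (volume : Measure Circle1) := hI1.const_mul (4 * M^3)
      have i2 : Integrable (fun x => (3 * M^4) * ρ x) (volume : Measure Circle1) := hρ.1.const_mul (3 * M^4)
      have hp : ∀ x, (4 * M^3) * (S x * ρ x) - (3 * M^4) * ρ x ≤ S x ^ 4 * ρ x := by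
        intro x
        have h1 : 4 * M^3 * S x - 3 * M^4 ≤ S x ^ 4 := by
          have := mul_nonneg (sq_nonneg (S x - M)) (add_nonneg (sq_nonneg (S x + M)) (mul_nonneg zero_le_two (sq_nonneg M)))
          linarith
        have h2 := mul_le_mul_of_nonneg_right h1 (hρ.2.2 x)
        linarith
      have h := integral_mono (i1.sub i2) hI4 hp
      have e1 : (∫ x, ((4 * M^3) * (S x * ρ x) - (3 * M^4) * ρ x)) = M^4 := by
        rw [integral_sub i1 i2, integral_const_mul, integral_const_mul, hρ.2.1, ← hM]; ring
      exact e1.symm.le.trans h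
    have hSR : ∫ x, S x ^ 4 * ρ x ≤ R * (K * (n * (t₂ - t₁))^2) := by
      have hSI : Integrable (fun x => S x ^ 4) (volume : Measure Circle1) := circle_integrable ⟨_, hSc.pow 4⟩
      have : ∫ x, S x ^ 4 * ρ x ≤ ∫ x, R * S x ^ 4 := by
        apply integral_mono_ae hI4 (hSI.const_mul R)
        filter_upwards [hρR] with x hx
        have : 0 ≤ S x ^ 4 := by positivity
        nlinarith
      rw [integral_const_mul] at this
      rw [hcs] at hm
      have hm2 : ∫ x, S x ^ 4 ≤ K * (n * (t₂ - t₁))^2 := by rw [hS]; exact hm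
      exact this.trans (mul_le_mul_of_nonneg_left hm2 hR.le)
    have i1 : Integrable (fun x => 8 * (S x ^ 4 * ρ x)) (volume : Measure Circle1) := hI4.const_mul 8
    have i2 : Integrable (fun x => 8 * M^4 * ρ x) (volume : Measure Circle1) := hρ.1.const_mul (8 * M^4)
    have i3 : Integrable (fun x => |xiD Tarr f ρ n x t₂ - xiD Tarr f ρ n x t₁| ^ 4 * ρ x) (volume : Measure Circle1) :=
      rho_integrable hρ ((((xiD_cont Tarr hfc ρ n t₂).sub (xiD_cont Tarr hfc ρ n t₁)).abs).pow 4)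
    have i4 : Integrable (fun x => ((n:ℝ)⁻¹)^2 * (8 * (S x ^ 4 * ρ x) + 8 * M^4 * ρ x)) (volume : Measure Circle1) :=
      (i1.add i2).const_mul _
    have hp : ∀ x, |xiD Tarr f ρ n x t₂ - xiD Tarr f ρ n x t₁| ^ 4 * ρ x ≤ ((n:ℝ)⁻¹)^2 * (8 * (S x ^ 4 * ρ x) + 8 * M^4 * ρ x) := by
      intro x
      have hev : Even 4 := by decide
      rw [hev.pow_abs, hxi, mul_pow, hsq]
      have : (S x - M)^4 ≤ 8 * S x ^ 4 + 8 * M^4 := by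
        have a1 : (S x - M)^2 ≤ 2 * S x ^2 + 2 * M^2 := by nlinarith [sq_nonneg (S x + M)]
        have a2 := pow_le_pow_left₀ (sq_nonneg _) a1 2
        nlinarith [sq_nonneg (S x ^ 2 - M^2)]
      have h3 := mul_le_mul_of_nonneg_right this (hρ.2.2 x)
      have h4 := mul_le_mul_of_nonneg_left h3 (sq_nonneg (n:ℝ)⁻¹)
      linarith
    have hfin := integral_mono i3 i4 hp
    rw [integral_const_mul, integral_add i1 i2, integral_const_mul, integral_const_mul, hρ.2.1] at hfin
    have hb : 8 * (∫ x, S x ^ 4 * ρ x) + 8 * M^4 * 1 ≤ 16 * (R * (K * (n * (t₂ - t₁))^2)) := by linarith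
    refine hfin.trans ((mul_le_mul_of_nonneg_left hb (sq_nonneg _)).trans (le_of_eq ?_))
    rw [sq_abs]; field_simp
  intro n hn t₁ h₁ t₂ h₂
  rcases le_total t₁ t₂ with h | h
  · exact key n hn t₁ h₁ t₂ h₂ h
  · have := key n hn t₂ h₂ t₁ h₁ h
    simpa only [abs_sub_comm] using this
end


lemma chain_bound (ω : ℝ → ℝ) (hω : ContinuousOn ω (Icc 0 1)) {R q : ℝ} (hR : 0 ≤ R) (hq0 : 0 < q) (hq1 : q < 1)
    (h : ∀ m i : ℕ, i < 2 ^ m → |ω (((i:ℝ) + 1) / 2 ^ m) - ω ((i:ℝ) / 2 ^ m)| ≤ R * q ^ m)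
    (m : ℕ) (s t : ℝ) (hs : s ∈ Icc (0:ℝ) 1) (ht : t ∈ Icc (0:ℝ) 1) (hst : |s - t| ≤ (1/2) ^ m) :
    |ω s - ω t| ≤ (R + 2 * (R * q / (1 - q))) * q ^ m := by
  obtain ⟨a, ha⟩ : ∃ a : ℝ → ℕ → ℝ, a = fun t m => ((⌊(2:ℝ) ^ m * t⌋₊ : ℕ) : ℝ) / 2 ^ m := ⟨_, rfl⟩
  have hle : ∀ t ∈ Icc (0:ℝ) 1, ∀ m : ℕ, ((⌊(2:ℝ) ^ m * t⌋₊ : ℕ) : ℝ) ≤ 2 ^ m * t := fun t ht m =>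
    Nat.floor_le (mul_nonneg (by positivity) ht.1)
  have hmem : ∀ t ∈ Icc (0:ℝ) 1, ∀ m, a t m ∈ Icc (0:ℝ) 1 := by
    intro t ht m
    rw [ha]
    refine ⟨by positivity, ?_⟩
    simp only
    rw [div_le_one (by positivity)]
    refine (hle t ht m).trans ?_
    have : (0:ℝ) < 2 ^ m := by positivity
    nlinarith [ht.2]
  have hclose : ∀ t ∈ Icc (0:ℝ) 1, ∀ m, |a t m - t| ≤ (1/2) ^ m := by
    intro t ht m
    have h1 := hle t ht m
    have h2 := Nat.lt_floor_add_one ((2:ℝ) ^ m * t)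
    have h3 : (0:ℝ) < 2 ^ m := by positivity
    rw [ha]
    simp only
    have e : ((⌊(2:ℝ) ^ m * t⌋₊ : ℕ) : ℝ) / 2 ^ m - t = (((⌊(2:ℝ) ^ m * t⌋₊ : ℕ) : ℝ) - 2 ^ m * t) / 2 ^ m := by
      field_simp
    rw [e, abs_div, abs_of_pos h3, div_le_iff₀ h3, ← mul_pow]
    norm_num
    rw [abs_le]; constructor <;> linarith
  have htend : ∀ t ∈ Icc (0:ℝ) 1, Tendsto (fun m => ω (a t m)) atTop (𝓝 (ω t)) := by
    intro t ht
    have h1 : Tendsto (a t) atTop (𝓝 t) := by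
      rw [tendsto_iff_dist_tendsto_zero]
      refine squeeze_zero (fun _ => dist_nonneg) (fun m => hclose t ht m) ?_
      exact tendsto_pow_atTop_nhds_zero_of_lt_one (by norm_num) (by norm_num)
    exact (hω t ht).tendsto.comp (tendsto_nhdsWithin_iff.2 ⟨h1, Eventually.of_forall (hmem t ht)⟩)
  have hstep : ∀ t ∈ Icc (0:ℝ) 1, ∀ m, dist (ω (a t m)) (ω (a t (m+1))) ≤ (R * q) * q ^ m := by
    intro t ht m
    have e2 : (2:ℝ) ^ (m+1) * t = 2 * (2 ^ m * t) := by ring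
    obtain ⟨y, hy⟩ : ∃ y, y = (2:ℝ) ^ m * t := ⟨_, rfl⟩
    have hy0 : 0 ≤ y := by rw [hy]; exact mul_nonneg (by positivity) ht.1
    have l1 := Nat.floor_le hy0
    have l2 := Nat.lt_floor_add_one y
    have hcase : ⌊2 * y⌋₊ = 2 * ⌊y⌋₊ ∨ ⌊2 * y⌋₊ = 2 * ⌊y⌋₊ + 1 := by
      have a1 : 2 * ⌊y⌋₊ ≤ ⌊2 * y⌋₊ := Nat.le_floor (by push_cast; linarith)
      have a2 : ⌊2 * y⌋₊ < 2 * ⌊y⌋₊ + 2 := (Nat.floor_lt (by linarith)).2 (by push_cast; linarith)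
      omega
    have hb : (R * q) * q ^ m = R * q ^ (m+1) := by ring
    have hatm : a t m = ((2 * ⌊y⌋₊ : ℕ) : ℝ) / 2 ^ (m+1) := by
      rw [ha]; simp only [← hy]; push_cast; rw [pow_succ]; field_simp
    have hatm1 : a t (m+1) = ((⌊2 * y⌋₊ : ℕ) : ℝ) / 2 ^ (m+1) := by
      rw [ha]; simp only [e2, ← hy]
    rw [hb, hatm, hatm1]
    rcases hcase with hc | hc
    · rw [hc, dist_self]; positivity
    · have hlt : 2 * ⌊y⌋₊ < 2 ^ (m+1) := by
        have b1 : ((⌊2 * y⌋₊ : ℕ) : ℝ) ≤ 2 * y := Nat.floor_le (by linarith)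
        have b2 : 2 * y ≤ 2 ^ (m+1) := by
          rw [hy, ← e2]
          have : (0:ℝ) < 2 ^ (m+1) := by positivity
          nlinarith [ht.2]
        have b3 : ((⌊2 * y⌋₊ : ℕ) : ℝ) ≤ ((2 ^ (m+1) : ℕ) : ℝ) := by push_cast; linarith
        have b4 : ⌊2 * y⌋₊ ≤ 2 ^ (m+1) := by exact_mod_cast b3
        omega
      have := h (m+1) (2 * ⌊y⌋₊) hlt
      rw [hc, dist_comm, Real.dist_eq]
      push_cast at this ⊢
      exact this
  have hgeo : ∀ t ∈ Icc (0:ℝ) 1, |ω (a t m) - ω t| ≤ (R * q) * q ^ m / (1 - q) := fun t ht =>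
    dist_le_of_le_geometric_of_tendsto q (R * q) hq1 (hstep t ht) (htend t ht) m
  have hmid : ∀ s ∈ Icc (0:ℝ) 1, ∀ t ∈ Icc (0:ℝ) 1, s ≤ t → |s - t| ≤ (1/2) ^ m → |ω (a s m) - ω (a t m)| ≤ R * q ^ m := by
    intro s hs t ht hle' hst
    have h3 : (0:ℝ) < 2 ^ m := by positivity
    have hd : (2:ℝ) ^ m * t ≤ 2 ^ m * s + 1 := by
      rw [abs_sub_comm, abs_of_nonneg (by linarith)] at hst
      have := mul_le_mul_of_nonneg_left hst h3.le
      rw [← mul_pow] at this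
      norm_num at this
      linarith
    have c1 : ⌊(2:ℝ) ^ m * s⌋₊ ≤ ⌊(2:ℝ) ^ m * t⌋₊ := Nat.floor_le_floor (by gcongr)
    have c2 : ⌊(2:ℝ) ^ m * t⌋₊ ≤ ⌊(2:ℝ) ^ m * s⌋₊ + 1 := by
      refine (Nat.floor_le_floor hd).trans ?_
      rw [Nat.floor_add_one (mul_nonneg h3.le hs.1)]
    rcases Nat.eq_or_lt_of_le c1 with hc | hc
    · have : a s m = a t m := by rw [ha]; simp only [hc]
      rw [this, sub_self, abs_zero]; positivity
    · have hc' : ⌊(2:ℝ) ^ m * t⌋₊ = ⌊(2:ℝ) ^ m * s⌋₊ + 1 := by omega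
      have hlt : ⌊(2:ℝ) ^ m * s⌋₊ < 2 ^ m := by
        have b1 := hle t ht m
        have b2 : (2:ℝ) ^ m * t ≤ 2 ^ m := by nlinarith [ht.2]
        have b3 : ((⌊(2:ℝ) ^ m * t⌋₊ : ℕ) : ℝ) ≤ ((2 ^ m : ℕ) : ℝ) := by push_cast; linarith
        have b4 : ⌊(2:ℝ) ^ m * t⌋₊ ≤ 2 ^ m := by exact_mod_cast b3
        omega
      have := h m _ hlt
      rw [abs_sub_comm, ha]
      simp only [hc']
      push_cast
      exact this
  have hmid' : |ω (a s m) - ω (a t m)| ≤ R * q ^ m := by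
    rcases le_total s t with h' | h'
    · exact hmid s hs t ht h' hst
    · rw [abs_sub_comm]; rw [abs_sub_comm] at hst; exact hmid t ht s hs h' hst
  have g1 := hgeo s hs
  have g2 := hgeo t ht
  have hfin : (R + 2 * (R * q / (1 - q))) * q ^ m = R * q ^ m + 2 * ((R * q) * q ^ m / (1 - q)) := by ring
  rw [hfin]
  rw [abs_le] at *
  constructor <;> linarith [g1.1, g1.2, g2.1, g2.2, hmid'.1, hmid'.2]

/-- The compact set of paths with a prescribed modulus of continuity. -/
def cptPaths (C q : ℝ) : Set PathSpace :=
  {ω | UniformFun.toFun ω 0 = 0 ∧ ∀ (m : ℕ) (s t : Icc (0:ℝ) 1), |(s:ℝ) - t| ≤ (1/2) ^ m →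
    |UniformFun.toFun ω s - UniformFun.toFun ω t| ≤ C * q ^ m}

lemma modulus_small {C q : ℝ} (hq0 : 0 < q) (hq1 : q < 1) {ε : ℝ} (hε : 0 < ε) : ∃ m : ℕ, C * q ^ m < ε := by
  have : Tendsto (fun m : ℕ => C * q ^ m) atTop (𝓝 (C * 0)) :=
    (tendsto_pow_atTop_nhds_zero_of_lt_one hq0.le hq1).const_mul C
  rw [mul_zero] at this
  exact (this.eventually_lt_const hε).exists

lemma cptPaths_compact {C q : ℝ} (hq0 : 0 < q) (hq1 : q < 1) : IsCompact (cptPaths C q) := by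
  let A : Set (BoundedContinuousFunction (Icc (0:ℝ) 1) ℝ) :=
    {ω | ω 0 = 0 ∧ ∀ (m : ℕ) (s t : Icc (0:ℝ) 1), |(s:ℝ) - t| ≤ (1/2) ^ m → |ω s - ω t| ≤ C * q ^ m}
  have hA : IsCompact A := by
    apply BoundedContinuousFunction.arzela_ascoli₂ (Metric.closedBall (0:ℝ) C) (isCompact_closedBall _ _)
    · have : A = {ω | ω 0 = 0} ∩ ⋂ (m : ℕ) (s : Icc (0:ℝ) 1) (t : Icc (0:ℝ) 1) (_ : |(s:ℝ) - t| ≤ (1/2) ^ m),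
          {ω : BoundedContinuousFunction (Icc (0:ℝ) 1) ℝ | |ω s - ω t| ≤ C * q ^ m} := by
        ext ω; simp only [A, mem_inter_iff, mem_iInter]; rfl
      rw [this]
      have hev : ∀ s : Icc (0:ℝ) 1, Continuous (fun ω : BoundedContinuousFunction (Icc (0:ℝ) 1) ℝ => ω s) := fun s =>
        (BoundedContinuousFunction.lipschitz_eval_const s).continuous
      refine IsClosed.inter (isClosed_eq (hev 0) continuous_const) ?_
      refine isClosed_iInter fun m => isClosed_iInter fun s => isClosed_iInter fun t => isClosed_iInter fun _ => ?_
      exact isClosed_le (((hev s).sub (hev t)).abs) continuous_const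
    · intro ω x hω
      have := hω.2 0 x 0 (by
        have := x.2
        rw [abs_le]; constructor <;> simp <;> linarith [this.1, this.2])
      rw [hω.1] at this
      simpa using this
    · apply UniformEquicontinuous.equicontinuous
      rw [Metric.uniformEquicontinuous_iff]
      intro ε hε
      obtain ⟨m, hm⟩ := modulus_small (C := C) hq0 hq1 hε
      refine ⟨(1/2) ^ m, by positivity, fun x y hxy ω => ?_⟩
      exact (ω.2.2 m x y hxy.le).trans_lt hm
  have : cptPaths C q = (UniformFun.ofFun ∘ DFunLike.coe) '' A := by
    ext ω
    constructor
    · intro hω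
      have hc : Continuous (UniformFun.toFun ω) := by
        rw [Metric.continuous_iff]
        intro b ε hε
        obtain ⟨m, hm⟩ := modulus_small (C := C) hq0 hq1 hε
        refine ⟨(1/2) ^ m, by positivity, fun x hxy => ?_⟩
        exact (hω.2 m x b hxy.le).trans_lt hm
      exact ⟨BoundedContinuousFunction.mkOfCompact ⟨UniformFun.toFun ω, hc⟩, hω, rfl⟩
    · rintro ⟨φ, hφ, rfl⟩
      exact hφ
  rw [this]
  exact hA.image BoundedContinuousFunction.isInducing_coeFn.continuous

lemma union_bound {Ω : Type*} [MeasurableSpace Ω] (μ : Measure Ω) (X : Ω → ℝ → ℝ) {K R : ℝ} (hK : 0 < K) (hR : 0 < R)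
    (h : ∀ t₁ ∈ Icc (0:ℝ) 1, ∀ t₂ ∈ Icc (0:ℝ) 1, ∀ a : ℝ, 0 < a →
      μ {x | a < |X x t₂ - X x t₁|} ≤ ENNReal.ofReal (K * |t₂ - t₁| ^ 2 / a ^ 4)) :
    μ (⋃ m : ℕ, ⋃ i ∈ Finset.range (2 ^ m), {x | R * (9/10) ^ m < |X x (((i:ℝ) + 1) / 2 ^ m) - X x ((i:ℝ) / 2 ^ m)|})
      ≤ ENNReal.ofReal (5 * K / R ^ 4) := by
  have h1 : ∀ m : ℕ, μ (⋃ i ∈ Finset.range (2 ^ m), {x | R * (9/10) ^ m < |X x (((i:ℝ) + 1) / 2 ^ m) - X x ((i:ℝ) / 2 ^ m)|})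
      ≤ ENNReal.ofReal (K / R ^ 4 * (5000 / 6561) ^ m) := by
    intro m
    have hm : (0:ℝ) < 2 ^ m := by positivity
    refine (measure_biUnion_finset_le _ _).trans ?_
    have h2 : ∀ i ∈ Finset.range (2 ^ m), μ {x | R * (9/10) ^ m < |X x (((i:ℝ) + 1) / 2 ^ m) - X x ((i:ℝ) / 2 ^ m)|} ≤
        ENNReal.ofReal (K * (1 / 2 ^ m) ^ 2 / (R * (9/10) ^ m) ^ 4) := by
      intro i hi
      have hi' : (i:ℝ) + 1 ≤ 2 ^ m := by exact_mod_cast Finset.mem_range.1 hi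
      have hi0 : (0:ℝ) ≤ i := Nat.cast_nonneg i
      have := h ((i:ℝ) / 2 ^ m) ⟨by positivity, by rw [div_le_one hm]; linarith⟩ (((i:ℝ) + 1) / 2 ^ m)
        ⟨by positivity, by rw [div_le_one hm]; linarith⟩ (R * (9/10) ^ m) (by positivity)
      rwa [← sub_div, add_sub_cancel_left, abs_of_pos (by positivity)] at this
    refine (Finset.sum_le_sum h2).trans (le_of_eq ?_)
    rw [Finset.sum_const, Finset.card_range, nsmul_eq_mul, ← ENNReal.ofReal_natCast,
      ← ENNReal.ofReal_mul (by positivity)]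
    congr 1
    push_cast
    have e : ((5000:ℝ) / 6561) ^ m = (1/2) ^ m / ((9/10) ^ m) ^ 4 := by
      rw [← pow_mul, mul_comm m 4, pow_mul, ← div_pow]; norm_num
    rw [e, mul_pow, one_div, one_div, inv_pow]
    field_simp
    rw [← mul_pow]; norm_num
  refine (measure_iUnion_le _).trans ((ENNReal.tsum_le_tsum h1).trans ?_)
  have hs : Summable (fun m : ℕ => K / R ^ 4 * (5000 / 6561 : ℝ) ^ m) :=
    (summable_geometric_of_lt_one (by norm_num) (by norm_num)).mul_left _
  rw [← ENNReal.ofReal_tsum_of_nonneg (fun m => by positivity) hs, tsum_mul_left,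
    tsum_geometric_of_lt_one (by norm_num) (by norm_num)]
  apply ENNReal.ofReal_le_ofReal
  have : 0 < K / R ^ 4 := by positivity
  rw [mul_div_assoc]
  norm_num
  linarith

section
variable {lam Astar : ℝ}

lemma markov_xi (Tarr : ℕ → ℕ → CM lam Astar) {f : Circle1 → ℝ} (hfc : Continuous f) {ρ : Circle1 → ℝ}
    (hρ : IsProbDensity ρ) {n : ℕ} {t₁ t₂ V : ℝ}
    (hV : (∫ x : Circle1, |xiD Tarr f ρ n x t₂ - xiD Tarr f ρ n x t₁| ^ 4 * ρ x) ≤ V) {a : ℝ} (ha : 0 < a) :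
    (volume.withDensity (fun x => ENNReal.ofReal (ρ x))) {x | a < |xiD Tarr f ρ n x t₂ - xiD Tarr f ρ n x t₁|}
      ≤ ENNReal.ofReal (V / a ^ 4) := by
  obtain ⟨Y, hY⟩ : ∃ Y : Circle1 → ℝ, Y = fun x => |xiD Tarr f ρ n x t₂ - xiD Tarr f ρ n x t₁| := ⟨_, rfl⟩
  have hYc : Continuous Y := by rw [hY]; exact ((xiD_cont Tarr hfc ρ n t₂).sub (xiD_cont Tarr hfc ρ n t₁)).abs
  have hY0 : ∀ x, 0 ≤ Y x := fun x => by rw [hY]; exact abs_nonneg _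
  have hV' : ∫ x : Circle1, Y x ^ 4 * ρ x ≤ V := by rw [hY]; exact hV
  have hsub : {x | a < |xiD Tarr f ρ n x t₂ - xiD Tarr f ρ n x t₁|} ⊆ {x | ENNReal.ofReal (a ^ 4) ≤ ENNReal.ofReal (Y x ^ 4)} := by
    intro x hx
    have hx' : a < Y x := by rw [hY]; exact hx
    exact ENNReal.ofReal_le_ofReal (pow_le_pow_left₀ ha.le hx'.le 4)
  have hYm : Measurable (fun x => ENNReal.ofReal (Y x ^ 4)) := (hYc.pow 4).measurable.ennreal_ofReal
  have hρm : AEMeasurable (fun x => ENNReal.ofReal (ρ x)) (volume : Measure Circle1) := hρ.1.aemeasurable.ennreal_ofReal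
  refine (measure_mono hsub).trans ?_
  refine (meas_ge_le_lintegral_div hYm.aemeasurable (by simp; positivity) ENNReal.ofReal_ne_top).trans ?_
  rw [lintegral_withDensity_eq_lintegral_mul₀ hρm hYm.aemeasurable]
  have e : ∫⁻ x, ((fun x => ENNReal.ofReal (ρ x)) * fun x => ENNReal.ofReal (Y x ^ 4)) x = ENNReal.ofReal (∫ x : Circle1, Y x ^ 4 * ρ x) := by
    have hint : Integrable (fun x => Y x ^ 4 * ρ x) (volume : Measure Circle1) := rho_integrable hρ (hYc.pow 4)
    rw [ofReal_integral_eq_lintegral_ofReal hint (Eventually.of_forall (fun x => mul_nonneg (pow_nonneg (hY0 x) 4) (hρ.2.2 x)))]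
    apply lintegral_congr
    intro x
    rw [Pi.mul_apply, ← ENNReal.ofReal_mul (hρ.2.2 x), mul_comm]
  rw [e, ← ENNReal.ofReal_div_of_pos (by positivity)]
  apply ENNReal.ofReal_le_ofReal
  gcongr

lemma xiD_zero (Tarr : ℕ → ℕ → CM lam Astar) (f : Circle1 → ℝ) (ρ : Circle1 → ℝ) (n : ℕ) (x : Circle1) :
    xiD Tarr f ρ n x 0 = 0 := by
  simp [xiD, zetaMean, zetaP]

lemma xiD_contOn (Tarr : ℕ → ℕ → CM lam Astar) {f : Circle1 → ℝ} (hfc : Continuous f) {ρ : Circle1 → ℝ}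
    (hρ : IsProbDensity ρ) (n : ℕ) (x : Circle1) : ContinuousOn (xiD Tarr f ρ n x) (Icc 0 1) := by
  have hz : ContinuousOn (fun t => zetaP Tarr f n x t) (Icc 0 1) := by
    have hc : Continuous (fun t : ℝ => (n:ℝ)⁻¹ * ∑ k ∈ Finset.range (n+1), wt (n * t - k) * fnk Tarr f n k x) := by
      have := wt_cont
      fun_prop
    exact hc.continuousOn.congr (fun t ht => zetaP_eq Tarr f n x t ht)
  have hm : ContinuousOn (fun t => zetaMean Tarr f ρ n t) (Icc 0 1) := by
    have hc : Continuous (fun t : ℝ => (n:ℝ)⁻¹ * ∑ k ∈ Finset.range (n+1), wt (n * t - k) * ∫ y : Circle1, fnk Tarr f n k y * ρ y) := by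
      have := wt_cont
      fun_prop
    refine hc.continuousOn.congr (fun t ht => ?_)
    have e : ∀ y, zetaP Tarr f n y t * ρ y = (n:ℝ)⁻¹ * ∑ k ∈ Finset.range (n+1), wt (n * t - k) * (fnk Tarr f n k y * ρ y) := by
      intro y
      rw [zetaP_eq Tarr f n y t ht, mul_assoc, Finset.sum_mul]
      congr 1
      exact Finset.sum_congr rfl (fun k _ => by ring)
    simp only [zetaMean, e]
    rw [integral_const_mul, integral_finsetSum _ (fun k _ => (rho_integrable hρ (fnk_cont Tarr hfc n k)).const_mul (wt (n * t - k)))]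
    simp only [integral_const_mul]
  exact (continuousOn_const.mul hz).sub (continuousOn_const.mul hm)

lemma xi_tight (Tarr : ℕ → ℕ → CM lam Astar) {f : Circle1 → ℝ} (hfc : Continuous f) {ρ : Circle1 → ℝ}
    (hρ : IsProbDensity ρ) {K : ℝ} (hK : 0 < K)
    (hmom : ∀ n : ℕ, 1 ≤ n → ∀ t₁ ∈ Set.Icc (0 : ℝ) 1, ∀ t₂ ∈ Set.Icc (0 : ℝ) 1,
        (∫ x : Circle1, |xiD Tarr f ρ n x t₂ - xiD Tarr f ρ n x t₁| ^ 4 * ρ x) ≤ K * |t₂ - t₁| ^ 2)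
    (ε : ℝ) (hε : 0 < ε) : ∃ K : Set PathSpace, IsCompact K ∧
      ∀ n : ℕ, 1 ≤ n →
        Measure.map (fun x => pathOf (xiD Tarr f ρ n x))
            (volume.withDensity (fun x => ENNReal.ofReal (ρ x))) Kᶜ ≤ ENNReal.ofReal ε := by
  obtain ⟨R, hRe⟩ : ∃ R : ℝ, R = 1 + 5 * K / ε := ⟨_, rfl⟩
  have hR1 : 1 ≤ R := by rw [hRe]; have : 0 < 5 * K / ε := by positivity
                         linarith
  have hR : 0 < R := by linarith
  have hRε : 5 * K / R ^ 4 ≤ ε := by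
    rw [div_le_iff₀ (by positivity)]
    have h1 : R ≤ R ^ 4 := le_self_pow₀ hR1 (by norm_num)
    have h2 : 5 * K / ε ≤ R ^ 4 := by linarith
    rw [div_le_iff₀ hε] at h2
    linarith
  have hcpt := cptPaths_compact (C := R + 2 * (R * (9/10) / (1 - 9/10))) (q := 9/10) (by norm_num) (by norm_num)
  refine ⟨_, hcpt, fun n hn => ?_⟩
  by_cases hae : AEMeasurable (fun x => pathOf (xiD Tarr f ρ n x)) (volume.withDensity (fun x => ENNReal.ofReal (ρ x)))
  · haveI : BorelSpace PathSpace := ⟨rfl⟩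
    rw [Measure.map_apply_of_aemeasurable hae hcpt.isClosed.measurableSet.compl]
    refine le_trans ?_ ((union_bound (volume.withDensity (fun x => ENNReal.ofReal (ρ x))) (fun x t => xiD Tarr f ρ n x t) hK hR
      (fun t₁ h₁ t₂ h₂ a ha => markov_xi Tarr hfc hρ (hmom n hn t₁ h₁ t₂ h₂) ha)).trans (ENNReal.ofReal_le_ofReal hRε))
    apply measure_mono
    intro x hx
    by_contra hcon
    apply hx
    simp only [mem_iUnion, not_exists, mem_ofPred_eq, not_lt, Finset.mem_range] at hcon
    refine ⟨?_, fun m s t hst => ?_⟩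
    · exact xiD_zero Tarr f ρ n x
    · exact chain_bound (xiD Tarr f ρ n x) (xiD_contOn Tarr hfc hρ n x) hR.le (by norm_num) (by norm_num)
        (fun m i hi => hcon m i hi) m s t s.2 t.2 hst
  · rw [Measure.map_of_not_aemeasurable hae]; simp
end

/-- Lemma `lem:xi_tight`.  If the density of `μ` is Lipschitz on `J_z`
with constant `L`, then the fourth moments satisfy the Kolmogorov bound
`μ[|ξₙ(t₂) − ξₙ(t₁)|⁴] ≤ K|t₂ − t₁|²`, and consequently the laws of the random paths
`t ↦ ξₙ(x,t)` on `C⁰([0,1],ℝ)` form a tight sequence. -/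
theorem statement18 {lam Astar : ℝ} (hlam : 1 < lam) (hA : 0 < Astar)
    {η : ℝ} (hη : η ∈ Set.Ioo (0 : ℝ) 1)
    (γ : ℝ → CM lam Astar) (hγ : HolderCurve η γ)
    (Tarr : ℕ → ℕ → CM lam Astar) (hT : ArrayApprox η γ Tarr)
    (f : Circle1 → ℝ) (hf : ∃ K : NNReal, LipschitzWith K f)
    (L : ℝ) (hL : 0 < L) (z : Circle1) (ρ : Circle1 → ℝ)
    (hρ : IsProbDensity ρ) (hρlip : LipOnArc z L ρ) :
    (∃ K : ℝ, 0 < K ∧ ∀ n : ℕ, 1 ≤ n →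
      ∀ t₁ ∈ Set.Icc (0 : ℝ) 1, ∀ t₂ ∈ Set.Icc (0 : ℝ) 1,
        (∫ x : Circle1, |xiD Tarr f ρ n x t₂ - xiD Tarr f ρ n x t₁| ^ 4 * ρ x) ≤
          K * |t₂ - t₁| ^ 2) ∧
    (∀ ε : ℝ, 0 < ε → ∃ K : Set PathSpace, IsCompact K ∧
      ∀ n : ℕ, 1 ≤ n →
        Measure.map (fun x => pathOf (xiD Tarr f ρ n x))
            (volume.withDensity (fun x => ENNReal.ofReal (ρ x))) Kᶜ ≤ ENNReal.ofReal ε) := by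
  obtain ⟨K, hK, hmom⟩ := xi_moment hlam hA Tarr f hf L hL z ρ hρ hρlip
  exact ⟨⟨K, hK, hmom⟩, xi_tight Tarr hf.choose_spec.continuous hρ hK hmom⟩
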